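/- arXiv:2301.00278 — 4 statements merged into one kernel-verified Lean document; each statement's English description precedes it below -/
import Mathlib

section
/- Let t ≥ 1 and let G be a connected graph whose isometric path antichain cover number is at least 8t + 64. Then G contains a (t+1)-fat turtle as an induced subgraph. -/
open SimpleGraph

variable {V : Type*}

/-- One step of the BFS DAG `G_r`: the edge `ab` is oriented from `a` to `b`
(toward the root `r`), i.e. `d(r,b) = d(r,a) - 1`. -/
def dagStep (G : SimpleGraph V) (r a b : V) : Prop :=
  G.Adj a b ∧ G.dist r a = G.dist r b + 1

/-- Reachability by a directed path in the BFS DAG `G_r`. -/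
def dagReach (G : SimpleGraph V) (r a b : V) : Prop :=
  Relation.ReflTransGen (dagStep G r) a b

/-- A finite set of vertices is an antichain with respect to the root `r`:
its vertices are pairwise unreachable in the BFS DAG `G_r`. -/
def IsAntichainSet (G : SimpleGraph V) (r : V) (A : Finset V) : Prop :=
  ∀ a ∈ A, ∀ b ∈ A, a ≠ b → ¬ dagReach G r a b ∧ ¬ dagReach G r b a

/-- A walk is an isometric path: a shortest path between its endpoints. -/
def IsIsometricPath (G : SimpleGraph V) {u v : V} (p : G.Walk u v) : Prop :=
  p.IsPath ∧ p.length = G.dist u v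

/-- The vertices of `p` can be covered by at most `k` many `r`-rooted isometric paths. -/
def CoveredBy (G : SimpleGraph V) (r : V) {x y : V} (p : G.Walk x y) (k : ℕ) : Prop :=
  ∃ s : Finset (Σ v : V, G.Walk r v), s.card ≤ k ∧
    (∀ q ∈ s, IsIsometricPath G q.2) ∧
    ∀ a ∈ p.support, ∃ q ∈ s, a ∈ q.2.support
/-- The graph consisting of the edges of the closed walk `C` (the "cycle graph"
of `C`); distances in this graph are distances along the cycle. -/
def cycleGraph (G : SimpleGraph V) {c : V} (C : G.Walk c c) : SimpleGraph V :=
  SimpleGraph.fromEdgeSet {e | e ∈ C.edges}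

/-- `G` contains a `t`-fat turtle as an induced subgraph: a cycle `C` and an
induced `(u,v)`-path `P` of length at least `t` such that (a) `P` and `C` are
vertex-disjoint, (b) no internal vertex of `P` has a neighbour in `C` while `u`
and `v` both have one, (c) neighbours of `u` on `C` and neighbours of `v` on `C`
are at distance at least `t` in `C`, and (d) there are `c ≠ c'` on `C` such that
the neighbours of `u` and of `v` on `C` lie in two distinct components of
`C - {c, c'}`. -/
def HasFatTurtle (G : SimpleGraph V) (t : ℕ) : Prop :=
  ∃ (c0 u v : V) (C : G.Walk c0 c0) (P : G.Walk u v),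
    C.IsCycle ∧ P.IsPath ∧ t ≤ P.length ∧
    (∀ x ∈ P.support, ∀ y ∈ P.support, G.Adj x y → s(x, y) ∈ P.edges) ∧
    (∀ x ∈ P.support, x ∉ C.support) ∧
    (∀ x ∈ P.support, x ≠ u → x ≠ v → ∀ y ∈ C.support, ¬ G.Adj x y) ∧
    (∃ y ∈ C.support, G.Adj u y) ∧ (∃ y ∈ C.support, G.Adj v y) ∧
    (∀ y ∈ C.support, G.Adj u y → ∀ y' ∈ C.support, G.Adj v y' →
      t ≤ (cycleGraph G C).dist y y') ∧
    (∃ c c' : V, c ≠ c' ∧ c ∈ C.support ∧ c' ∈ C.support ∧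
      ∃ Ku Kv : ((cycleGraph G C).induce
          {x : V | x ∈ C.support ∧ x ≠ c ∧ x ≠ c'}).ConnectedComponent,
        Ku ≠ Kv ∧
        (∀ y, G.Adj u y → y ∈ C.support →
          ∃ hy : y ∈ {x : V | x ∈ C.support ∧ x ≠ c ∧ x ≠ c'},
            ((cycleGraph G C).induce
              {x : V | x ∈ C.support ∧ x ≠ c ∧ x ≠ c'}).connectedComponentMk ⟨y, hy⟩ = Ku) ∧
        (∀ y, G.Adj v y → y ∈ C.support →
          ∃ hy : y ∈ {x : V | x ∈ C.support ∧ x ≠ c ∧ x ≠ c'},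
            ((cycleGraph G C).induce
              {x : V | x ∈ C.support ∧ x ≠ c ∧ x ≠ c'}).connectedComponentMk ⟨y, hy⟩ = Kv))


namespace FT

variable {G : SimpleGraph V}

lemma isPath_append {u v w : V} {p : G.Walk u v} {q : G.Walk v w} (hp : p.IsPath) (hq : q.IsPath)
    (h : ∀ x ∈ p.support, x ∈ q.support → x = v) : (p.append q).IsPath := by
  rw [Walk.isPath_def, Walk.support_append, List.nodup_append']
  refine ⟨hp.support_nodup, hq.support_nodup.tail, ?_⟩
  intro x hx hxq
  have h1 := h x hx (List.mem_of_mem_tail hxq)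
  subst h1
  have := hq.support_nodup
  rw [← Walk.cons_tail_support] at this
  exact (List.nodup_cons.mp this).1 hxq

/-- a shortest walk inside the support of `W` is an induced path -/
lemma exists_induced {u v : V} (W : G.Walk u v) :
    ∃ P : G.Walk u v, P.IsPath ∧ (∀ x ∈ P.support, x ∈ W.support) ∧
      (∀ x ∈ P.support, ∀ y ∈ P.support, G.Adj x y → s(x, y) ∈ P.edges) := by
  classical
  have hex : ∃ n, ∃ P : G.Walk u v, (∀ x ∈ P.support, x ∈ W.support) ∧ P.length = n :=
    ⟨_, W, fun _ h => h, rfl⟩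
  obtain ⟨P0, hP0, hl0⟩ := Nat.find_spec hex
  have hmin : ∀ P : G.Walk u v, (∀ x ∈ P.support, x ∈ W.support) → Nat.find hex ≤ P.length :=
    fun P hP => Nat.find_min' hex ⟨P, hP, rfl⟩
  have hPl : P0.bypass.length ≤ Nat.find hex := hl0 ▸ P0.length_bypass_le_length
  have hPs : ∀ x ∈ P0.bypass.support, x ∈ W.support :=
    fun x hx => hP0 x (P0.support_bypass_subset_support hx)
  refine ⟨P0.bypass, P0.bypass_isPath, hPs, ?_⟩
  generalize P0.bypass = P at *
  intro x hx y hy hxy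
  obtain ⟨p1, p2, rfl⟩ := Walk.mem_support_iff_exists_append.mp hx
  have key : ∀ {a b : V} (p3 : G.Walk a b), a ≠ b → p3.length ≤ 1 → s(a, b) ∈ p3.edges := by
    intro a b p3 hab h
    cases p3 with
    | nil => exact absurd rfl hab
    | cons h1 q =>
      cases q with
      | nil => simp
      | cons h2 q => simp at h
  rcases (Walk.mem_support_append_iff _ _).mp hy with hy | hy
  · obtain ⟨p3, p4, rfl⟩ := Walk.mem_support_iff_exists_append.mp hy
    have h1 := hmin (p3.append (Walk.cons hxy.symm p2)) (by
      intro z hz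
      apply hPs
      simp only [Walk.mem_support_append_iff, Walk.support_cons, List.mem_cons] at hz ⊢
      rcases hz with hz | hz | hz
      · exact Or.inl (Or.inl hz)
      · exact Or.inl (Or.inl (hz ▸ p3.end_mem_support))
      · exact Or.inr hz)
    have h2 : p4.length ≤ 1 := by
      simp only [Walk.length_append, Walk.length_cons] at h1 hPl
      omega
    have := key p4 hxy.ne.symm h2
    rw [Sym2.eq_swap] at this
    simp [this]
  · obtain ⟨p3, p4, rfl⟩ := Walk.mem_support_iff_exists_append.mp hy
    have h1 := hmin (p1.append (Walk.cons hxy p4)) (by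
      intro z hz
      apply hPs
      simp only [Walk.mem_support_append_iff, Walk.support_cons, List.mem_cons] at hz ⊢
      rcases hz with hz | hz | hz
      · exact Or.inl hz
      · exact Or.inl (hz ▸ p1.end_mem_support)
      · exact Or.inr (Or.inr hz))
    have h2 : p3.length ≤ 1 := by
      simp only [Walk.length_append, Walk.length_cons] at h1 hPl
      omega
    have := key p3 hxy.ne h2
    simp [this]

/-- the first vertex of a walk that sees `K` -/
lemma first_contact (K : Set V) {u v : V} (p : G.Walk u v) (hv : v ∈ K) (hu : u ∉ K) :
    ∃ (w : V) (q : G.Walk u w), w ∈ p.support ∧ (∃ k ∈ K, G.Adj w k) ∧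
      (∀ x ∈ q.support, x ∉ K) ∧ (∀ x ∈ q.support, (∃ k ∈ K, G.Adj x k) → x = w) := by
  induction p with
  | nil => exact absurd hv hu
  | @cons a b c h p ih =>
    by_cases ha : ∃ k ∈ K, G.Adj a k
    · exact ⟨a, Walk.nil, by simp, ha, by simpa using hu, by simp⟩
    · have hb : b ∉ K := fun hb => ha ⟨b, hb, h⟩
      obtain ⟨w, q, h1, h2, h3, h4⟩ := ih hv hb
      refine ⟨w, Walk.cons h q, by simp [h1], h2, ?_, ?_⟩
      · intro x hx
        rw [Walk.support_cons, List.mem_cons] at hx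
        rcases hx with rfl | hx
        · exact hu
        · exact h3 x hx
      · intro x hx hk
        rw [Walk.support_cons, List.mem_cons] at hx
        rcases hx with rfl | hx
        · exact absurd hk ha
        · exact h4 x hx hk

/-- Inner vertices of a path lie in one component once the ends are removed. -/
lemma reach_inner {H : SimpleGraph V} {S : Set V} {a b : V} (p : G.Walk a b)
    (hS : ∀ x ∈ p.support, x ∈ S) (hH : ∀ e ∈ p.edges, e ∈ H.edgeSet) :
    (H.induce S).Reachable ⟨a, hS a p.start_mem_support⟩ ⟨b, hS b p.end_mem_support⟩ := by
  induction p with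
  | nil => exact Reachable.refl _
  | @cons x y z h p ih =>
    have h1 := ih (fun w hw => hS w (by simp [hw])) (fun e he => hH e (by simp [he]))
    refine Reachable.trans (Adj.reachable ?_) h1
    have := hH s(x, y) (by simp)
    simpa using this

lemma inner_comp {H : SimpleGraph V} {S : Set V} {a b : V} (p : G.Walk a b) (hp : p.IsPath)
    (hS : ∀ x ∈ p.support, x ≠ a → x ≠ b → x ∈ S) (hH : ∀ e ∈ p.edges, e ∈ H.edgeSet)
    {x y : V} (hx : x ∈ p.support) (hxa : x ≠ a) (hxb : x ≠ b)
    (hy : y ∈ p.support) (hya : y ≠ a) (hyb : y ≠ b) :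
    (H.induce S).Reachable ⟨x, hS x hx hxa hxb⟩ ⟨y, hS y hy hya hyb⟩ := by
  obtain ⟨p1, p2, rfl⟩ := Walk.mem_support_iff_exists_append.mp hx
  rcases (Walk.mem_support_append_iff _ _).mp hy with hy' | hy'
  · obtain ⟨p3, p4, rfl⟩ := Walk.mem_support_iff_exists_append.mp hy'
    have hs : ∀ z ∈ p4.support, z ∈ S := by
      intro z hz
      refine hS z (by simp [hz]) ?_ ?_
      · rintro rfl
        exact hp.of_append_left.ne_of_mem_support_of_append (x := z) hya.symm
          p3.start_mem_support hz rfl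
      · rintro rfl
        exact hp.ne_of_mem_support_of_append hxb.symm (x := z) (by simp [hz])
          p2.end_mem_support rfl
    exact (reach_inner p4 hs (fun e he => hH e (by simp [he]))).symm
  · obtain ⟨p3, p4, rfl⟩ := Walk.mem_support_iff_exists_append.mp hy'
    have hs : ∀ z ∈ p3.support, z ∈ S := by
      intro z hz
      refine hS z (by simp [hz]) ?_ ?_
      · rintro rfl
        exact hp.ne_of_mem_support_of_append (x := z) (y := z) hxa.symm
          p1.start_mem_support (by simp [hz]) rfl
      · rintro rfl
        exact hp.of_append_right.ne_of_mem_support_of_append (x := z) (y := z) hyb.symm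
          hz p4.end_mem_support rfl
    exact reach_inner p3 hs (fun e he => hH e (by simp [he]))


lemma turtle (hG : G.Connected) {t : ℕ} {a b u v : V} (R S : G.Walk a b)
    (hR : R.IsPath) (hS : S.IsPath) (hab : a ≠ b)
    (hRS : ∀ w ∈ R.support, w ∈ S.support → w = a ∨ w = b)
    (W : G.Walk u v) (hWR : ∀ w ∈ W.support, w ∉ R.support) (hWS : ∀ w ∈ W.support, w ∉ S.support)
    (hadj : ∀ w ∈ W.support, (∃ k, (k ∈ R.support ∨ k ∈ S.support) ∧ G.Adj w k) → w = u ∨ w = v)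
    (hu : ∃ k, (k ∈ R.support ∨ k ∈ S.support) ∧ G.Adj u k)
    (hv : ∃ k, (k ∈ R.support ∨ k ∈ S.support) ∧ G.Adj v k)
    (hd : t + 3 ≤ G.dist u v)
    (hT : ∀ k, (k ∈ R.support ∨ k ∈ S.support) → G.Adj u k → k ∈ R.support ∧ k ≠ a ∧ k ≠ b)
    (hB : ∀ k, (k ∈ R.support ∨ k ∈ S.support) → G.Adj v k → k ∈ S.support ∧ k ≠ a ∧ k ≠ b) :
    HasFatTurtle G (t + 1) := by
  obtain ⟨P, hP, hPW, hPi⟩ := exists_induced W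
  have hmem : ∀ x, x ∈ (R.append S.reverse).support ↔ x ∈ R.support ∨ x ∈ S.support := by
    intro x; simp [Walk.mem_support_append_iff]
  have hedge : ∀ e, e ∈ (R.append S.reverse).edges ↔ e ∈ R.edges ∨ e ∈ S.edges := by
    intro x; simp
  obtain ⟨ku, hku, hku'⟩ := hu
  obtain ⟨kv, hkv, hkv'⟩ := hv
  obtain ⟨hkuR, hkua, hkub⟩ := hT ku hku hku'
  obtain ⟨hkvS, hkva, hkvb⟩ := hB kv hkv hkv'
  have hlen : 1 < R.length := by
    cases R with
    | nil => exact absurd rfl hab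
    | cons h q =>
      cases q with
      | nil => simp at hkuR; tauto
      | cons h2 q => simp
  have hcyc : (R.append S.reverse).IsCycle := by
    refine hR.isCycle_append hS.reverse ?_ (Or.inl hlen)
    intro x hx hx'
    have h1 := List.mem_of_mem_tail hx
    have h2 : x ∈ S.support := by simpa using List.mem_of_mem_tail hx'
    rcases hRS x h1 h2 with rfl | rfl
    · have := hR.support_nodup
      rw [← Walk.cons_tail_support] at this
      exact (List.nodup_cons.mp this).1 hx
    · have := hS.reverse.support_nodup
      rw [← Walk.cons_tail_support] at this
      exact (List.nodup_cons.mp this).1 hx'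
  have hHG : cycleGraph G (R.append S.reverse) ≤ G := by
    intro x y hxy
    simp only [_root_.cycleGraph, fromEdgeSet_adj, Set.mem_ofPred_eq] at hxy
    exact Walk.adj_of_mem_edges _ hxy.1
  have hHe : ∀ e ∈ (R.append S.reverse).edges,
      e ∈ (cycleGraph G (R.append S.reverse)).edgeSet := by
    intro e he
    have h1 := Walk.edges_subset_edgeSet _ he
    simp only [_root_.cycleGraph, edgeSet_fromEdgeSet]
    exact ⟨he, G.not_isDiag_of_mem_edgeSet h1⟩
  have hHR : ∀ e ∈ R.edges, e ∈ (cycleGraph G (R.append S.reverse)).edgeSet :=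
    fun e he => hHe e ((hedge e).2 (Or.inl he))
  have hHS : ∀ e ∈ S.edges, e ∈ (cycleGraph G (R.append S.reverse)).edgeSet :=
    fun e he => hHe e ((hedge e).2 (Or.inr he))
  have hreach : ∀ x ∈ (R.append S.reverse).support, ∀ y ∈ (R.append S.reverse).support,
      (cycleGraph G (R.append S.reverse)).Reachable x y := by
    have h0 : ∀ x ∈ (R.append S.reverse).support,
      (cycleGraph G (R.append S.reverse)).Reachable a x := by
      intro x hx
      obtain ⟨p1, p2, hp⟩ := Walk.mem_support_iff_exists_append.mp hx
      exact ⟨p1.transfer _ (fun e he => hHe e (by rw [hp]; simp [he]))⟩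
    intro x hx y hy
    exact (h0 x hx).symm.trans (h0 y hy)
  refine ⟨a, u, v, R.append S.reverse, P, hcyc, hP, ?_, hPi, ?_, ?_, ?_, ?_, ?_, ?_⟩
  · have := dist_le P
    omega
  · intro x hx hxC
    rcases (hmem x).1 hxC with h | h
    · exact hWR x (hPW x hx) h
    · exact hWS x (hPW x hx) h
  · intro x hx hxu hxv y hy hxy
    rcases hadj x (hPW x hx) ⟨y, (hmem y).1 hy, hxy⟩ with h | h
    · exact hxu h
    · exact hxv h
  · exact ⟨ku, (hmem _).2 hku, hku'⟩
  · exact ⟨kv, (hmem _).2 hkv, hkv'⟩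
  · intro y hy huy y' hy' hvy'
    have h1 := (hreach y hy y' hy').dist_anti hHG
    have h2 := hG.dist_triangle (u := u) (v := y) (w := v)
    have h3 := hG.dist_triangle (u := y) (v := y') (w := v)
    have h4 := dist_eq_one_iff_adj.2 huy
    have h5 := dist_eq_one_iff_adj.2 hvy'.symm
    omega
  · refine ⟨a, b, hab, (hmem _).2 (Or.inl R.start_mem_support),
      (hmem _).2 (Or.inl R.end_mem_support), ?_⟩
    have hSR : ∀ x ∈ R.support, x ≠ a → x ≠ b →
        x ∈ {x : V | x ∈ (R.append S.reverse).support ∧ x ≠ a ∧ x ≠ b} :=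
      fun x hx h1 h2 => ⟨(hmem x).2 (Or.inl hx), h1, h2⟩
    have hSS : ∀ x ∈ S.support, x ≠ a → x ≠ b →
        x ∈ {x : V | x ∈ (R.append S.reverse).support ∧ x ≠ a ∧ x ≠ b} :=
      fun x hx h1 h2 => ⟨(hmem x).2 (Or.inr hx), h1, h2⟩
    refine ⟨SimpleGraph.connectedComponentMk _ ⟨ku, hSR ku hkuR hkua hkub⟩,
      SimpleGraph.connectedComponentMk _ ⟨kv, hSS kv hkvS hkva hkvb⟩, ?_, ?_, ?_⟩
    · intro heq
      obtain ⟨q⟩ := ConnectedComponent.exact heq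
      have inv : ∀ (x y : {x : V | x ∈ (R.append S.reverse).support ∧ x ≠ a ∧ x ≠ b})
          (q : ((cycleGraph G (R.append S.reverse)).induce
            {x : V | x ∈ (R.append S.reverse).support ∧ x ≠ a ∧ x ≠ b}).Walk x y),
          x.1 ∈ R.support → y.1 ∈ R.support := by
        intro x y q
        induction q with
        | nil => exact id
        | @cons x y z h q ih =>
          intro hx
          apply ih
          simp only [_root_.cycleGraph, comap_adj, Function.Embedding.subtype_apply, fromEdgeSet_adj,
            Set.mem_ofPred_eq] at h
          rcases (hedge _).1 h.1 with h1 | h1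
          · exact R.snd_mem_support_of_mem_edges h1
          · have h2 := S.fst_mem_support_of_mem_edges h1
            rcases hRS _ hx h2 with h3 | h3
            · exact absurd h3 x.2.2.1
            · exact absurd h3 x.2.2.2
      have := inv _ _ q hkuR
      rcases hRS _ this hkvS with h3 | h3
      · exact hkva h3
      · exact hkvb h3
    · intro y huy hy
      obtain ⟨h1, h2, h3⟩ := hT y ((hmem y).1 hy) huy
      refine ⟨hSR y h1 h2 h3, ?_⟩
      exact ConnectedComponent.sound (inner_comp R hR hSR hHR h1 h2 h3 hkuR hkua hkub)
    · intro y huy hy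
      obtain ⟨h1, h2, h3⟩ := hB y ((hmem y).1 hy) huy
      refine ⟨hSS y h1 h2 h3, ?_⟩
      exact ConnectedComponent.sound (inner_comp S hS hSS hHS h1 h2 h3 hkvS hkva hkvb)

end FT

namespace FT

variable {G : SimpleGraph V} {r : V}

def Vert (G : SimpleGraph V) (r : V) {a b : V} (p : G.Walk a b) : Prop :=
  ∀ d ∈ p.darts, dagStep G r d.fst d.snd

lemma reach_dist (hG : G.Connected) {a q : V} (h : dagReach G r a q) :
    G.dist r a = G.dist r q + G.dist a q := by
  have h1 : ∃ d, G.dist a q ≤ d ∧ G.dist r a = G.dist r q + d := by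
    induction h with
    | refl => exact ⟨0, by simp, by simp⟩
    | @tail b c _ hbc ih =>
      obtain ⟨d, h1, h2⟩ := ih
      have h3 := hG.dist_triangle (u := a) (v := b) (w := c)
      have h4 := dist_eq_one_iff_adj.2 hbc.1
      have h5 := hbc.2
      exact ⟨d + 1, by omega, by omega⟩
  obtain ⟨d, h1, h2⟩ := h1
  have h3 := hG.dist_triangle (u := r) (v := q) (w := a)
  have h4 : G.dist a q = G.dist q a := dist_comm
  omega

lemma reach_eq (hG : G.Connected) {a q : V} (h : dagReach G r a q)
    (hl : G.dist r a ≤ G.dist r q) : a = q := by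
  have := reach_dist hG h
  exact hG.dist_eq_zero_iff.1 (by omega)

lemma Vert.reach {a b : V} {p : G.Walk a b} (hp : Vert G r p) :
    ∀ x ∈ p.support, dagReach G r a x ∧ dagReach G r x b := by
  induction p with
  | nil =>
    intro x hx
    simp at hx
    subst hx
    exact ⟨Relation.ReflTransGen.refl, Relation.ReflTransGen.refl⟩
  | @cons a b c h p ih =>
    have hp' : Vert G r p := fun d hd => hp d (by simp [hd])
    have h1 : dagStep G r a b := hp ⟨(a, b), h⟩ (by simp)
    intro x hx
    rw [Walk.support_cons, List.mem_cons] at hx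
    rcases hx with rfl | hx
    · exact ⟨Relation.ReflTransGen.refl,
        Relation.ReflTransGen.head h1 (ih hp' b p.start_mem_support).2⟩
    · exact ⟨Relation.ReflTransGen.head h1 (ih hp' x hx).1, (ih hp' x hx).2⟩

lemma Vert.isPath (hG : G.Connected) {a b : V} {p : G.Walk a b} (hp : Vert G r p) :
    p.IsPath := by
  induction p with
  | nil => simp
  | @cons a b c h p ih =>
    have hp' : Vert G r p := fun d hd => hp d (by simp [hd])
    have h1 : dagStep G r a b := hp ⟨(a, b), h⟩ (by simp)
    rw [Walk.cons_isPath_iff]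
    refine ⟨ih hp', fun ha => ?_⟩
    have := reach_dist hG (hp'.reach a ha).1
    have := h1.2
    omega

lemma exists_vert {a b : V} (h : dagReach G r a b) : ∃ p : G.Walk a b, Vert G r p := by
  induction h using Relation.ReflTransGen.head_induction_on with
  | refl => exact ⟨Walk.nil, by intro d hd; simp at hd⟩
  | @head a c hac _ ih =>
    obtain ⟨p, hp⟩ := ih
    refine ⟨Walk.cons hac.1 p, ?_⟩
    intro d hd
    rw [Walk.darts_cons, List.mem_cons] at hd
    rcases hd with rfl | hd
    · exact hac
    · exact hp d hd

lemma reach_root (hG : G.Connected) (v : V) : dagReach G r v r := by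
  have key : ∀ {v w : V} (p : G.Walk v w), w = r → p.length ≤ G.dist r v → dagReach G r v r := by
    intro v w p
    induction p with
    | nil => rintro rfl _; exact Relation.ReflTransGen.refl
    | @cons a b c h p ih =>
      rintro rfl hl
      rw [Walk.length_cons] at hl
      have h1 : G.dist c b ≤ p.length := by rw [dist_comm]; exact dist_le p
      have h2 := hG.dist_triangle (u := c) (v := b) (w := a)
      have h3 := dist_eq_one_iff_adj.2 h.symm
      exact Relation.ReflTransGen.head ⟨h, by omega⟩ (ih rfl (by omega))
  obtain ⟨p, hp⟩ := hG.exists_walk_length_eq_dist v r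
  exact key p rfl (by rw [hp, dist_comm])

/-- `f` restricted to `[0,n]` is an isometric path. -/
def Iso (G : SimpleGraph V) (f : ℕ → V) (n : ℕ) : Prop :=
  ∀ i j, i ≤ j → j ≤ n → G.dist (f i) (f j) + i = j

variable {f : ℕ → V} {n : ℕ}

lemma Iso.inj (hf : Iso G f n) {i j : ℕ} (hi : i ≤ n) (hj : j ≤ n) (h : f i = f j) : i = j := by
  rcases le_total i j with h1 | h1
  · have := hf i j h1 hj
    rw [h, dist_self] at this
    omega
  · have := hf j i h1 hi
    rw [h, dist_self] at this
    omega

lemma Iso.seg (hf : Iso G f n) {i j : ℕ} (hij : i ≤ j) (hj : j ≤ n) :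
    ∃ p : G.Walk (f i) (f j), p.IsPath ∧ ∀ x, x ∈ p.support ↔ ∃ k, i ≤ k ∧ k ≤ j ∧ x = f k := by
  induction j, hij using Nat.le_induction with
  | base =>
    refine ⟨Walk.nil, by simp, fun x => ?_⟩
    simp only [Walk.support_nil, List.mem_singleton]
    constructor
    · rintro rfl; exact ⟨i, le_rfl, le_rfl, rfl⟩
    · rintro ⟨k, h1, h2, rfl⟩
      rw [le_antisymm h2 h1]
  | succ j hij ih =>
    obtain ⟨p, hp, hs⟩ := ih (by omega)
    have hadj : G.Adj (f j) (f (j + 1)) := by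
      rw [← dist_eq_one_iff_adj]
      have := hf j (j + 1) (by omega) hj
      omega
    refine ⟨p.concat hadj, ?_, fun x => ?_⟩
    · refine hp.concat ?_ hadj
      rw [hs]
      rintro ⟨k, h1, h2, h3⟩
      have := hf.inj hj (by omega) h3
      omega
    · rw [Walk.support_concat, List.mem_append, hs]
      simp only [List.mem_singleton]
      constructor
      · rintro (⟨k, h1, h2, h3⟩ | h)
        · exact ⟨k, h1, by omega, h3⟩
        · exact ⟨j + 1, by omega, le_rfl, h⟩
      · rintro ⟨k, h1, h2, h3⟩
        rcases Nat.lt_or_ge j k with h4 | h4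
        · right
          rw [h3]
          congr 1
          omega
        · exact Or.inl ⟨k, h1, h4, h3⟩

lemma Iso.mono (hG : G.Connected) (r : V) (hf : Iso G f n) {i j : ℕ} (hij : i ≤ j) (hj : j ≤ n) :
    i + G.dist r (f i) ≤ j + G.dist r (f j) ∧ i + G.dist r (f j) ≤ j + G.dist r (f i) := by
  have h1 := hf i j hij hj
  have h2 := hG.dist_triangle (u := r) (v := f i) (w := f j)
  have h3 := hG.dist_triangle (u := r) (v := f j) (w := f i)
  have h4 : G.dist (f j) (f i) = G.dist (f i) (f j) := dist_comm
  omega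

lemma Iso.near (hG : G.Connected) (hf : Iso G f n) {i j D : ℕ} {q : V} (hi : i ≤ n) (hj : j ≤ n)
    (hq : dagReach G r (f i) q) (hd : G.dist q (f j) ≤ D) :
    (i ≤ j → j + G.dist r (f j) ≤ i + G.dist r (f i) + 2 * D) ∧
    (j ≤ i → i + G.dist r (f j) ≤ j + G.dist r (f i) + 2 * D) := by
  have h1 := reach_dist hG hq
  have h2 := hG.dist_triangle (u := r) (v := q) (w := f j)
  have h3 := hG.dist_triangle (u := f i) (v := q) (w := f j)
  constructor
  · intro h
    have := hf i j h hj
    omega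
  · intro h
    have := hf j i h hi
    rw [dist_comm] at this
    omega

def Gap (G : SimpleGraph V) (r : V) (f : ℕ → V) (M i j : ℕ) : Prop :=
  i ≤ j ∧ i + G.dist r (f i) + M ≤ j + G.dist r (f j) ∧
    i + G.dist r (f j) + M ≤ j + G.dist r (f i)

lemma Iso.near_lt (hG : G.Connected) (hf : Iso G f n) {M i k w D : ℕ} {q : V}
    (hg : Gap G r f M i w) (hk : k ≤ n) (hw : w ≤ n)
    (hq : dagReach G r (f i) q) (hd : G.dist q (f k) ≤ D) (hD : 2 * D < M) : k < w := by
  by_contra hlt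
  have h1 := (hf.near hG (hg.1.trans hw) hk hq hd).1 (by have := hg.1; omega)
  have h2 := hf.mono hG r (i := w) (j := k) (by omega) hk
  have h3 := hg.2.1
  omega

lemma Iso.near_gt (hG : G.Connected) (hf : Iso G f n) {M i k a D : ℕ} {q : V}
    (hg : Gap G r f M a i) (hk : k ≤ n) (hi : i ≤ n)
    (hq : dagReach G r (f i) q) (hd : G.dist q (f k) ≤ D) (hD : 2 * D < M) : a < k := by
  by_contra hlt
  have h1 := (hf.near hG hi hk hq hd).2 (by have := hg.1; omega)
  have h2 := hf.mono hG r (i := k) (j := a) (by omega) (hg.1.trans hi)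
  have h3 := hg.2.2
  omega

/-- Lowest vertex of the path reachable from `f i`. -/
lemma lowest (hG : G.Connected) (r : V) (f : ℕ → V) {n i : ℕ} (hi : i ≤ n) :
    ∃ j ≤ n, dagReach G r (f i) (f j) ∧
      ∀ k ≤ n, dagReach G r (f j) (f k) → f k = f j := by
  classical
  have hne : ((Finset.range (n + 1)).filter (fun k => dagReach G r (f i) (f k))).Nonempty :=
    ⟨i, by simp only [Finset.mem_filter, Finset.mem_range]
           exact ⟨by omega, Relation.ReflTransGen.refl⟩⟩
  obtain ⟨j, hj, hmin⟩ := Finset.exists_min_image _ (fun k => G.dist r (f k)) hne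
  simp only [Finset.mem_filter, Finset.mem_range] at hj hmin
  refine ⟨j, by omega, hj.2, fun k hk hjk => ?_⟩
  exact (reach_eq hG hjk (hmin k ⟨by omega, hj.2.trans hjk⟩)).symm

end FT

namespace FT

variable {G : SimpleGraph V} {r : V} {f : ℕ → V} {n : ℕ}

set_option maxHeartbeats 1600000 in
lemma core [Fintype V] (hG : G.Connected) (hf : Iso G f n) {t x a y0 w z0 : ℕ} (ht : 1 ≤ t)
    (hxa : Gap G r f (2 * t + 15) x a) (hay : Gap G r f (2 * t + 15) a y0)
    (hyw : Gap G r f (2 * t + 15) y0 w) (hwz : Gap G r f (2 * t + 15) w z0) (hz0 : z0 ≤ n) :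
    HasFatTurtle G (t + 1) := by
  classical
  have hw : w ≤ n := hwz.1.trans hz0
  have hy0 : y0 ≤ n := hyw.1.trans hw
  have ha : a ≤ n := hay.1.trans hy0
  have hx : x ≤ n := hxa.1.trans ha
  obtain ⟨y, hy, hy0y, hylow⟩ := lowest hG r f hy0
  obtain ⟨z, hz, hz0z, hzlow⟩ := lowest hG r f hz0
  -- proximity to the path
  have nearx : ∀ q k, k ≤ n → dagReach G r (f x) q → G.dist q (f k) ≤ t + 2 → k < a :=
    fun q k hk hq hd => hf.near_lt hG hxa hk ha hq hd (by omega)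
  have neary1 : ∀ q k, k ≤ n → dagReach G r (f y) q → G.dist q (f k) ≤ t + 2 → k < w :=
    fun q k hk hq hd => hf.near_lt hG hyw hk hw (hy0y.trans hq) hd (by omega)
  have neary2 : ∀ q k, k ≤ n → dagReach G r (f y) q → G.dist q (f k) ≤ t + 2 → a < k :=
    fun q k hk hq hd => hf.near_gt hG hay hk hy0 (hy0y.trans hq) hd (by omega)
  have nearz : ∀ q k, k ≤ n → dagReach G r (f z) q → G.dist q (f k) ≤ t + 2 → w < k :=
    fun q k hk hq hd => hf.near_gt hG hwz hk hz0 (hz0z.trans hq) hd (by omega)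
  have hyw' : y < w := neary1 (f y) y hy Relation.ReflTransGen.refl (by simp)
  have hay' : a < y := neary2 (f y) y hy Relation.ReflTransGen.refl (by simp)
  have hwz' : w < z := nearz (f z) z hz Relation.ReflTransGen.refl (by simp)
  have hxa' := hxa.1
  have hne : (Finset.univ.filter (fun m => dagReach G r (f y) m ∧ dagReach G r (f z) m)).Nonempty :=
    ⟨r, by simp only [Finset.mem_filter, Finset.mem_univ, true_and]
           exact ⟨reach_root hG _, reach_root hG _⟩⟩
  obtain ⟨m, hm, hmax⟩ := Finset.exists_max_image _ (fun k => G.dist r k) hne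
  simp only [Finset.mem_filter, Finset.mem_univ, true_and] at hm hmax
  obtain ⟨Qy, hQy⟩ := exists_vert hm.1
  obtain ⟨Qz, hQz⟩ := exists_vert hm.2
  obtain ⟨sg, hsg, hsgs⟩ := hf.seg (show y ≤ z by omega) hz
  have hQyP : ∀ k ≤ n, f k ∈ Qy.support → k = y :=
    fun k hk h => hf.inj hk hy (hylow k hk (hQy.reach _ h).1)
  have hQzP : ∀ k ≤ n, f k ∈ Qz.support → k = z :=
    fun k hk h => hf.inj hk hz (hzlow k hk (hQz.reach _ h).1)
  have hQyz : ∀ q, q ∈ Qy.support → q ∈ Qz.support → q = m :=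
    fun q h1 h2 => reach_eq hG (hQy.reach _ h1).2 (hmax q ⟨(hQy.reach _ h1).1, (hQz.reach _ h2).1⟩)
  set K : Set V := {v | v ∈ Qy.support ∨ v ∈ Qz.support ∨ ∃ k, y ≤ k ∧ k ≤ z ∧ v = f k} with hK
  have hKP : ∀ k ≤ n, f k ∈ K → y ≤ k := by
    rintro k hk (h | h | ⟨j, h1, h2, h3⟩)
    · exact (hQyP k hk h).ge
    · have := hQzP k hk h
      omega
    · have := hf.inj hk (by omega) h3
      omega
  have hxK : f x ∉ K := fun h => by
    have := hKP x hx h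
    omega
  have hyK : f y ∈ K := Or.inl Qy.start_mem_support
  have hmK : m ∈ K := Or.inl Qy.end_mem_support
  -- the two contact vertices
  obtain ⟨sx, _, hsxs⟩ := hf.seg (show x ≤ y by omega) hy
  obtain ⟨u, W1, hu, ⟨ku, hku, hku'⟩, hW1, hW1'⟩ := first_contact K sx hyK hxK
  obtain ⟨l, hxl, hly, rfl⟩ := (hsxs u).1 hu
  have hln : l ≤ n := by omega
  have hlK : f l ∉ K := hW1 _ W1.end_mem_support
  have hly' : l < y := by
    rcases Nat.lt_or_ge l y with h | h
    · exact h
    · exact absurd (by rw [le_antisymm hly h]; exact hyK) hlK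
  obtain ⟨q1, hq1⟩ := exists_vert (reach_root (r := r) hG (f x))
  obtain ⟨q2, hq2⟩ := exists_vert (reach_root (r := r) hG m)
  obtain ⟨w0, W2, hw0, ⟨kw, hkw, hkw'⟩, hW2, hW2'⟩ :=
    first_contact K (q1.append q2.reverse) hmK hxK
  have hw0K : w0 ∉ K := hW2 _ W2.end_mem_support
  have hw0c : dagReach G r (f x) w0 ∨ (dagReach G r m w0 ∧ G.dist r w0 < G.dist r m) := by
    rw [Walk.mem_support_append_iff, Walk.support_reverse, List.mem_reverse] at hw0
    rcases hw0 with h | h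
    · exact Or.inl (hq1.reach _ h).1
    · refine Or.inr ⟨(hq2.reach _ h).1, ?_⟩
      by_contra hlt
      have := reach_eq hG (hq2.reach _ h).1 (by omega)
      exact hw0K (this ▸ hmK)
  -- neighbours of `f l` on the cycle
  have hTq : ∀ q ∈ K, G.Adj (f l) q → q ∈ Qy.support := by
    rintro q (h | h | ⟨k, h1, h2, rfl⟩) hadj
    · exact h
    · have := dist_eq_one_iff_adj.2 hadj.symm
      have := nearz q l hln (hQz.reach _ h).1 (by omega)
      omega
    · have h3 := dist_eq_one_iff_adj.2 hadj
      have h4 := hf l k (by omega) (by omega)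
      have : k = y := by omega
      subst this
      exact Qy.start_mem_support
  have hal : a < l := by
    have := dist_eq_one_iff_adj.2 hku'.symm
    exact neary2 ku l hln (hQy.reach _ (hTq _ hku hku')).1 (by omega)
  have hdist : t + 3 ≤ G.dist (f l) w0 := by
    by_contra hlt
    rw [dist_comm] at hlt
    rcases hw0c with h | h
    · have := nearx w0 l hln h (by omega)
      omega
    · have := nearz w0 l hln (hm.2.trans h.1) (by omega)
      omega
  -- the lowest neighbour of `f l`
  have hne2 : (Finset.univ.filter (fun q => q ∈ Qy.support ∧ G.Adj (f l) q)).Nonempty :=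
    ⟨ku, by simp only [Finset.mem_filter, Finset.mem_univ, true_and]
            exact ⟨hTq _ hku hku', hku'⟩⟩
  obtain ⟨q, hq, hqmin⟩ := Finset.exists_min_image _ (fun k => G.dist r k) hne2
  simp only [Finset.mem_filter, Finset.mem_univ, true_and] at hq hqmin
  have hlq : G.dist (f l) q = 1 := dist_eq_one_iff_adj.2 hq.2
  have hqm : q ≠ m := by
    rintro rfl
    have := nearz q l hln hm.2 (by rw [dist_comm]; omega)
    omega
  have hyq : dagReach G r (f y) q := (hQy.reach _ hq.1).1
  obtain ⟨p1, p2, rfl⟩ := Walk.mem_support_iff_exists_append.mp hq.1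
  cases p2 with
  | nil => exact absurd rfl hqm
  | @cons _ c _ hqc p3 =>
  have hp1 : Vert G r p1 := fun d hd => hQy d (by simp [hd])
  have hp3 : Vert G r p3 := fun d hd => hQy d (by simp [hd])
  have hstep : dagStep G r q c := hQy ⟨(q, c), hqc⟩ (by simp)
  have hcl := hstep.2
  have hmem : ∀ v, v ∈ (p1.append (Walk.cons hqc p3)).support ↔
      v ∈ p1.support ∨ v ∈ p3.support := by
    intro v
    rw [Walk.mem_support_append_iff, Walk.support_cons, List.mem_cons]
    constructor
    · rintro (h | rfl | h)
      · exact Or.inl h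
      · exact Or.inl p1.end_mem_support
      · exact Or.inr h
    · tauto
  have hp1l : ∀ v ∈ p1.support, G.dist r q ≤ G.dist r v := fun v hv => by
    have := reach_dist hG (hp1.reach v hv).2
    omega
  have hp3l : ∀ v ∈ p3.support, G.dist r v ≤ G.dist r c := fun v hv => by
    have := reach_dist hG (hp3.reach v hv).1
    omega
  have hcm : G.dist r m ≤ G.dist r c := hp3l m p3.end_mem_support
  have hcQ : c ∈ (p1.append (Walk.cons hqc p3)).support := (hmem c).2 (Or.inr p3.start_mem_support)
  have hyl : G.dist r q ≤ G.dist r (f y) := hp1l _ p1.start_mem_support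
  have hcsg : c ∉ sg.support := by
    rw [hsgs]
    rintro ⟨k, h1, h2, h3⟩
    have := hQyP k (by omega) (h3 ▸ hcQ)
    subst this
    rw [← h3] at hyl
    omega
  -- neighbours of `w0` on the cycle
  have hBP : ∀ k, y ≤ k → k ≤ z → ¬ G.Adj w0 (f k) := by
    intro k h1 h2 h3
    have h4 := dist_eq_one_iff_adj.2 h3
    rcases hw0c with h | h
    · have := nearx w0 k (by omega) h (by omega)
      omega
    · have := nearz w0 k (by omega) (hm.2.trans h.1) (by omega)
      have := neary1 w0 k (by omega) (hm.1.trans h.1) (by omega)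
      omega
  have hBy : ∀ b, b ∈ (p1.append (Walk.cons hqc p3)).support → G.Adj w0 b →
      G.dist r b < G.dist r c := by
    intro b hb hadj
    have hwb := dist_eq_one_iff_adj.2 hadj
    by_contra hlt
    have hbc : b ≠ c := by
      rintro rfl
      have h1 := hG.dist_triangle (u := f l) (v := q) (w := w0)
      have h2 := hG.dist_triangle (u := q) (v := b) (w := w0)
      have h3 := dist_eq_one_iff_adj.2 hqc
      have h4 : G.dist b w0 = G.dist w0 b := dist_comm
      omega
    have hb1 : b ∈ p1.support := by
      rcases (hmem b).1 hb with h | h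
      · exact h
      · exact absurd (reach_eq hG (hp3.reach b h).1 (by omega)).symm hbc
    have hbq := hp1l b hb1
    have htri1 := hG.dist_triangle (u := r) (v := w0) (w := b)
    have htri2 := hG.dist_triangle (u := r) (v := b) (w := w0)
    rw [dist_comm (u := b)] at htri2
    rcases hw0c with h | h
    · have e1 := reach_dist hG h
      have e2 := reach_dist hG (hQy.reach b hb).1
      have e3 := reach_dist hG hyq
      have e4 := hf x y (by omega) hy
      have e5 := hf l y (by omega) hy
      have e6 := hG.dist_triangle (u := f x) (v := w0) (w := f y)
      have e7 := hG.dist_triangle (u := w0) (v := b) (w := f y)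
      have e8 : G.dist b (f y) = G.dist (f y) b := dist_comm
      have e9 := hG.dist_triangle (u := f y) (v := f l) (w := q)
      have e10 : G.dist (f y) (f l) = G.dist (f l) (f y) := dist_comm
      have e11 := hG.dist_triangle (u := r) (v := q) (w := f l)
      have e12 : G.dist q (f l) = G.dist (f l) q := dist_comm
      have e13 := hf.mono hG r (i := a) (j := l) (by omega) hln
      have e14 := hxa.2.1
      omega
    · omega
  -- assemble
  have hR : (Walk.cons hqc.symm (p1.reverse.append sg)).IsPath := by
    rw [Walk.cons_isPath_iff]
    constructor
    · refine isPath_append (hp1.isPath hG).reverse hsg ?_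
      intro v hv hv'
      rw [Walk.support_reverse, List.mem_reverse] at hv
      obtain ⟨k, h1, h2, rfl⟩ := (hsgs v).1 hv'
      rw [hQyP k (by omega) ((hmem _).2 (Or.inl hv))]
    · rw [Walk.mem_support_append_iff, Walk.support_reverse, List.mem_reverse]
      rintro (h | h)
      · have := hp1l c h
        omega
      · exact hcsg h
  have hS : (p3.append Qz.reverse).IsPath := by
    refine isPath_append (hp3.isPath hG) (hQz.isPath hG).reverse ?_
    intro v hv hv'
    rw [Walk.support_reverse, List.mem_reverse] at hv'
    exact hQyz v ((hmem v).2 (Or.inr hv)) hv'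
  have hRm : ∀ v, v ∈ (Walk.cons hqc.symm (p1.reverse.append sg)).support ↔
      v = c ∨ v ∈ p1.support ∨ v ∈ sg.support := by
    intro v
    rw [Walk.support_cons, List.mem_cons, Walk.mem_support_append_iff, Walk.support_reverse,
      List.mem_reverse]
  have hSm : ∀ v, v ∈ (p3.append Qz.reverse).support ↔ v ∈ p3.support ∨ v ∈ Qz.support := by
    intro v
    rw [Walk.mem_support_append_iff, Walk.support_reverse, List.mem_reverse]
  have hKm : ∀ v, (v ∈ (Walk.cons hqc.symm (p1.reverse.append sg)).support ∨
      v ∈ (p3.append Qz.reverse).support) ↔ v ∈ K := by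
    intro v
    have h0 : v = c → v ∈ p3.support := by rintro rfl; exact p3.start_mem_support
    show _ ↔ (v ∈ _ ∨ v ∈ _ ∨ ∃ k, y ≤ k ∧ k ≤ z ∧ v = f k)
    rw [hRm, hSm, hmem, hsgs]
    constructor
    · rintro ((h | h | h) | (h | h))
      · exact Or.inl (Or.inr (h0 h))
      · exact Or.inl (Or.inl h)
      · exact Or.inr (Or.inr h)
      · exact Or.inl (Or.inr h)
      · exact Or.inr (Or.inl h)
    · rintro ((h | h) | h | h)
      · exact Or.inl (Or.inr (Or.inl h))
      · exact Or.inr (Or.inl h)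
      · exact Or.inr (Or.inr h)
      · exact Or.inl (Or.inr (Or.inr h))
  have hczne : c ≠ f z := fun h => hcsg (h ▸ sg.end_mem_support)
  refine turtle hG (u := f l) (v := w0) _ _ hR hS hczne ?_ (W1.reverse.append W2)
    ?_ ?_ ?_ ⟨ku, (hKm _).2 hku, hku'⟩ ⟨kw, (hKm _).2 hkw, hkw'⟩ hdist ?_ ?_
  · intro v hv hv'
    rw [hRm] at hv
    rw [hSm] at hv'
    rcases hv with h | h | h
    · exact Or.inl h
    · exfalso
      have h1 := hp1l v h
      rcases hv' with h' | h'
      · have := hp3l v h'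
        omega
      · have := hQyz v ((hmem v).2 (Or.inl h)) h'
        rw [this] at h1
        omega
    · obtain ⟨k, h1, h2, rfl⟩ := (hsgs v).1 h
      rcases hv' with h' | h'
      · have h3 := hQyP k (by omega) ((hmem _).2 (Or.inr h'))
        have := hp3l _ h'
        rw [h3] at this
        omega
      · right
        rw [hQzP k (by omega) h']
  · intro v hv h
    have h1 := (hKm v).1 (Or.inl h)
    rw [Walk.mem_support_append_iff, Walk.support_reverse, List.mem_reverse] at hv
    rcases hv with hv | hv
    · exact hW1 v hv h1
    · exact hW2 v hv h1
  · intro v hv h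
    have h1 := (hKm v).1 (Or.inr h)
    rw [Walk.mem_support_append_iff, Walk.support_reverse, List.mem_reverse] at hv
    rcases hv with hv | hv
    · exact hW1 v hv h1
    · exact hW2 v hv h1
  · rintro v hv ⟨k, hk, hvk⟩
    have h1 := (hKm k).1 hk
    rw [Walk.mem_support_append_iff, Walk.support_reverse, List.mem_reverse] at hv
    rcases hv with hv | hv
    · exact Or.inl (hW1' v hv ⟨k, h1, hvk⟩)
    · exact Or.inr (hW2' v hv ⟨k, h1, hvk⟩)
  · intro k hk hadj
    have h1 := hTq k ((hKm k).1 hk) hadj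
    have h2 := hqmin k ⟨h1, hadj⟩
    have h3 : k ∈ p1.support := by
      rcases (hmem k).1 h1 with h | h
      · exact h
      · have := hp3l k h
        omega
    refine ⟨(hRm k).2 (Or.inr (Or.inl h3)), ?_, ?_⟩
    · rintro rfl
      omega
    · rintro rfl
      have := hQyP z hz h1
      omega
  · intro k hk hadj
    have hkP : ∀ j, y ≤ j → j ≤ z → k ≠ f j := by
      rintro j h1 h2 rfl
      exact hBP j h1 h2 hadj
    have hkz : k ≠ f z := hkP z (by omega) le_rfl
    have hkc : k ≠ c := by
      rintro rfl
      have := hBy k hcQ hadj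
      omega
    refine ⟨(hSm k).2 ?_, hkc, hkz⟩
    rcases (hKm k).1 hk with h | h | ⟨j, h1, h2, h3⟩
    · have h1 := hBy k h hadj
      rcases (hmem k).1 h with h' | h'
      · have := hp1l k h'
        omega
      · exact Or.inl h'
    · exact Or.inr h
    · exact absurd h3 (hkP j h1 h2)

lemma Iso.desc (hG : G.Connected) (hf : Iso G f n) {i j : ℕ} (hij : i ≤ j) (hj : j ≤ n)
    (h : j + G.dist r (f j) ≤ i + G.dist r (f i)) : dagReach G r (f i) (f j) := by
  induction j, hij using Nat.le_induction with
  | base => exact Relation.ReflTransGen.refl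
  | succ j hij ih =>
    have h1 := hf.mono hG r (i := j) (j := j + 1) (by omega) hj
    have h2 := hf.mono hG r (i := i) (j := j) hij (by omega)
    refine Relation.ReflTransGen.tail (ih (by omega) (by omega)) ⟨?_, by omega⟩
    rw [← dist_eq_one_iff_adj]
    have := hf j (j + 1) (by omega) hj
    omega

lemma Iso.asc (hG : G.Connected) (hf : Iso G f n) {i j : ℕ} (hij : i ≤ j) (hj : j ≤ n)
    (h : j + G.dist r (f i) ≤ i + G.dist r (f j)) : dagReach G r (f j) (f i) := by
  induction j, hij using Nat.le_induction with
  | base => exact Relation.ReflTransGen.refl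
  | succ j hij ih =>
    have h1 := hf.mono hG r (i := j) (j := j + 1) (by omega) hj
    have h2 := hf.mono hG r (i := i) (j := j) hij (by omega)
    refine Relation.ReflTransGen.head ⟨?_, by omega⟩ (ih (by omega) (by omega))
    rw [adj_comm, ← dist_eq_one_iff_adj]
    have := hf j (j + 1) (by omega) hj
    omega

lemma iso_of_walk {x y : V} (p : G.Walk x y) (hp : p.length = G.dist x y) :
    Iso G p.getVert p.length := by
  intro i j hij hj
  have h1 := length_eq_dist_of_subwalk (p₂ := (p.drop i).take (j - i)) hp
    ((Walk.isSubwalk_take _ _).trans (Walk.isSubwalk_drop _ _))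
  rw [Walk.take_length, Walk.drop_length, Walk.drop_getVert] at h1
  rw [show i + (j - i) = j by omega] at h1
  omega

end FT

/-- For `t ≥ 1`, if the isometric path antichain cover number of a
connected graph `G` is at least `8t + 64` (for every root `r` some isometric
path carries an antichain w.r.t. `r` of size at least `8t + 64`), then `G`
contains a `(t+1)`-fat turtle as an induced subgraph. -/
theorem statement7 [Fintype V] (G : SimpleGraph V) (hG : G.Connected) (t : ℕ) (ht : 1 ≤ t)
    (h : ∀ r : V, ∃ (x y : V) (p : G.Walk x y), IsIsometricPath G p ∧
      ∃ A : Finset V, (∀ a ∈ A, a ∈ p.support) ∧ IsAntichainSet G r A ∧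
        8 * t + 64 ≤ A.card) :
    HasFatTurtle G (t + 1) := by
  classical
  obtain ⟨r⟩ := hG.nonempty
  obtain ⟨x, y, p, hp, A, hA, hanti, hcard⟩ := h r
  have hf := FT.iso_of_walk p hp.2
  set f := p.getVert with hfdef
  set n := p.length with hn
  set I := (Finset.range (n + 1)).filter (fun k => f k ∈ A) with hI
  have hIA : 8 * t + 64 ≤ I.card := by
    refine hcard.trans ?_
    have : A ⊆ I.image f := by
      intro v hv
      obtain ⟨k, hk, hkl⟩ := Walk.mem_support_iff_exists_getVert.1 (hA v hv)
      rw [Finset.mem_image]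
      refine ⟨k, ?_, hk⟩
      rw [hI, Finset.mem_filter, Finset.mem_range]
      exact ⟨by omega, by rw [hfdef, hk]; exact hv⟩
    exact (Finset.card_le_card this).trans Finset.card_image_le
  obtain ⟨e, heI, hemono⟩ : ∃ e : ℕ → ℕ, (∀ k < I.card, e k ∈ I) ∧
      ∀ k, k + 1 < I.card → e k < e (k + 1) := by
    refine ⟨fun k => if h : k < I.card then I.orderEmbOfFin rfl ⟨k, h⟩ else 0, ?_, ?_⟩
    · intro k hk
      simp only [hk, dif_pos]
      exact Finset.orderEmbOfFin_mem _ _ _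
    · intro k hk
      have hk' : k < I.card := by omega
      simp only [hk, hk', dif_pos]
      exact (I.orderEmbOfFin rfl).strictMono (by simp [Fin.lt_def])
  have hIn : ∀ k < I.card, e k ≤ n ∧ f (e k) ∈ A := by
    intro k hk
    have := heI k hk
    rw [hI, Finset.mem_filter, Finset.mem_range] at this
    exact ⟨by omega, this.2⟩
  have hgap : ∀ m k, k + m < I.card → FT.Gap G r f m (e k) (e (k + m)) := by
    intro m k
    induction m with
    | zero => intro _; exact ⟨le_rfl, le_rfl, le_rfl⟩
    | succ m ih =>
      intro hm
      obtain ⟨h1, h2, h3⟩ := ih (by omega)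
      have h4 := hemono (k + m) (by omega)
      obtain ⟨h5, h6⟩ := hIn (k + m) (by omega)
      obtain ⟨h7, h8⟩ := hIn (k + m + 1) (by omega)
      have hne : f (e (k + m)) ≠ f (e (k + m + 1)) := fun hh => by
        have := hf.inj h5 h7 hh
        omega
      have hnr := hanti _ h6 _ h8 hne
      have h9 : ¬ _ := fun hh => hnr.1 (hf.desc hG h4.le h7 hh)
      have h10 : ¬ _ := fun hh => hnr.2 (hf.asc hG h4.le h7 hh)
      rw [← Nat.add_assoc]
      refine ⟨by omega, by omega, by omega⟩
  have g1 := hgap (2 * t + 15) 0 (by omega)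
  have g2 := hgap (2 * t + 15) (0 + (2 * t + 15)) (by omega)
  have g3 := hgap (2 * t + 15) (0 + (2 * t + 15) + (2 * t + 15)) (by omega)
  have g4 := hgap (2 * t + 15) (0 + (2 * t + 15) + (2 * t + 15) + (2 * t + 15)) (by omega)
  exact FT.core hG hf ht g1 g2 g3 g4 (hIn _ (by omega)).1
end

section
/- Every (t-theta, t-pyramid, t-prism)-free connected graph G has isometric path complexity at most 8t + 63. In particular, every (theta, pyramid, prism)-free graph has isometric path complexity at most 71. -/
open SimpleGraph

variable {V : Type*}

/-- `G` contains an (induced) `t`-theta: three internally vertex-disjoint induced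
paths from `a` to `b` of lengths at least `t+1`, with no edges between the paths
except at `a` and `b`. -/
def HasTTheta (G : SimpleGraph V) (t : ℕ) : Prop :=
  ∃ (a b : V) (p1 p2 p3 : G.Walk a b),
    p1.IsPath ∧ p2.IsPath ∧ p3.IsPath ∧
    t + 1 ≤ p1.length ∧ t + 1 ≤ p2.length ∧ t + 1 ≤ p3.length ∧
    (∀ x, x ∈ p1.support → x ∈ p2.support → x = a ∨ x = b) ∧
    (∀ x, x ∈ p1.support → x ∈ p3.support → x = a ∨ x = b) ∧
    (∀ x, x ∈ p2.support → x ∈ p3.support → x = a ∨ x = b) ∧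
    (∀ x y, (x ∈ p1.support ∨ x ∈ p2.support ∨ x ∈ p3.support) →
      (y ∈ p1.support ∨ y ∈ p2.support ∨ y ∈ p3.support) → G.Adj x y →
      s(x, y) ∈ p1.edges ∨ s(x, y) ∈ p2.edges ∨ s(x, y) ∈ p3.edges)

/-- `G` contains an (induced) `t`-prism: three vertex-disjoint induced paths
`a1…b1`, `a2…b2`, `a3…b3` of lengths at least `t`, with triangles `a1a2a3` and
`b1b2b3`, and no other edges between the paths. -/
def HasTPrism (G : SimpleGraph V) (t : ℕ) : Prop :=
  ∃ (a1 a2 a3 b1 b2 b3 : V) (p1 : G.Walk a1 b1) (p2 : G.Walk a2 b2) (p3 : G.Walk a3 b3),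
    p1.IsPath ∧ p2.IsPath ∧ p3.IsPath ∧
    t ≤ p1.length ∧ t ≤ p2.length ∧ t ≤ p3.length ∧
    (∀ x, x ∈ p1.support → x ∉ p2.support) ∧
    (∀ x, x ∈ p1.support → x ∉ p3.support) ∧
    (∀ x, x ∈ p2.support → x ∉ p3.support) ∧
    G.Adj a1 a2 ∧ G.Adj a2 a3 ∧ G.Adj a1 a3 ∧
    G.Adj b1 b2 ∧ G.Adj b2 b3 ∧ G.Adj b1 b3 ∧
    (∀ x y, (x ∈ p1.support ∨ x ∈ p2.support ∨ x ∈ p3.support) →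
      (y ∈ p1.support ∨ y ∈ p2.support ∨ y ∈ p3.support) → G.Adj x y →
      s(x, y) ∈ p1.edges ∨ s(x, y) ∈ p2.edges ∨ s(x, y) ∈ p3.edges ∨
      s(x, y) ∈ ({s(a1, a2), s(a2, a3), s(a1, a3),
                  s(b1, b2), s(b2, b3), s(b1, b3)} : Set (Sym2 V)))

/-- `G` contains an (induced) `t`-pyramid: three induced paths `a…b1`, `a…b2`,
`a…b3` of lengths at least `t`, two of which have lengths at least `t+1`,
vertex-disjoint except at `a`, with triangle `b1b2b3`, and no other edges
between the paths. -/
def HasTPyramid (G : SimpleGraph V) (t : ℕ) : Prop :=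
  ∃ (a b1 b2 b3 : V) (p1 : G.Walk a b1) (p2 : G.Walk a b2) (p3 : G.Walk a b3),
    p1.IsPath ∧ p2.IsPath ∧ p3.IsPath ∧
    t ≤ p1.length ∧ t ≤ p2.length ∧ t ≤ p3.length ∧
    ((t + 1 ≤ p1.length ∧ t + 1 ≤ p2.length) ∨
     (t + 1 ≤ p1.length ∧ t + 1 ≤ p3.length) ∨
     (t + 1 ≤ p2.length ∧ t + 1 ≤ p3.length)) ∧
    (∀ x, x ∈ p1.support → x ∈ p2.support → x = a) ∧
    (∀ x, x ∈ p1.support → x ∈ p3.support → x = a) ∧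
    (∀ x, x ∈ p2.support → x ∈ p3.support → x = a) ∧
    G.Adj b1 b2 ∧ G.Adj b2 b3 ∧ G.Adj b1 b3 ∧
    (∀ x y, (x ∈ p1.support ∨ x ∈ p2.support ∨ x ∈ p3.support) →
      (y ∈ p1.support ∨ y ∈ p2.support ∨ y ∈ p3.support) → G.Adj x y →
      s(x, y) ∈ p1.edges ∨ s(x, y) ∈ p2.edges ∨ s(x, y) ∈ p3.edges ∨
      s(x, y) ∈ ({s(b1, b2), s(b2, b3), s(b1, b3)} : Set (Sym2 V)))


/-- `x` and `y` are joined by a walk inside `X`. -/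
def RIn (G : SimpleGraph V) (X : Set V) (x y : V) : Prop :=
  ∃ p : G.Walk x y, ∀ v ∈ p.support, v ∈ X

theorem RIn.refl {G : SimpleGraph V} {X : Set V} {x : V} (h : x ∈ X) : RIn G X x x :=
  ⟨Walk.nil, by simpa using h⟩

theorem RIn.symm {G : SimpleGraph V} {X : Set V} {x y : V} (h : RIn G X x y) : RIn G X y x := by
  obtain ⟨p, hp⟩ := h
  exact ⟨p.reverse, by simpa using hp⟩

theorem RIn.trans {G : SimpleGraph V} {X : Set V} {x y z : V} (h : RIn G X x y)
    (h' : RIn G X y z) : RIn G X x z := by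
  obtain ⟨p, hp⟩ := h
  obtain ⟨q, hq⟩ := h'
  refine ⟨p.append q, fun v hv => ?_⟩
  rw [Walk.mem_support_append_iff] at hv
  exact hv.elim (hp v) (hq v)

theorem RIn.mono {G : SimpleGraph V} {X Y : Set V} {x y : V} (h : RIn G X x y)
    (hXY : X ⊆ Y) : RIn G Y x y := by
  obtain ⟨p, hp⟩ := h
  exact ⟨p, fun v hv => hXY (hp v hv)⟩

theorem RIn.step {G : SimpleGraph V} {X : Set V} {x y : V} (hx : x ∈ X) (hy : y ∈ X)
    (h : G.Adj x y) : RIn G X x y :=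
  ⟨h.toWalk, by simp [hx, hy]⟩

theorem RIn.seq {G : SimpleGraph V} {X : Set V} (c : ℕ → V) (i j : ℕ) (hij : i ≤ j)
    (hX : ∀ k, i ≤ k → k ≤ j → c k ∈ X) (hadj : ∀ k, i ≤ k → k < j → G.Adj (c k) (c (k+1))) :
    RIn G X (c i) (c j) := by
  induction j, hij using Nat.le_induction with
  | base => exact RIn.refl (hX i le_rfl le_rfl)
  | succ j hij ih =>
    exact (ih (fun k h1 h2 => hX k h1 (by omega)) (fun k h1 h2 => hadj k h1 (by omega))).trans
      (RIn.step (hX j hij (by omega)) (hX (j+1) (by omega) le_rfl) (hadj j hij (by omega)))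

/-- An induced path, as a sequence. -/
def IndSeq (G : SimpleGraph V) (c : ℕ → V) (n : ℕ) : Prop :=
  (∀ i j, i < j → j ≤ n → c i ≠ c j) ∧
  (∀ i j, i < j → j ≤ n → (G.Adj (c i) (c j) ↔ j = i + 1))

theorem RIn.exists_ind {G : SimpleGraph V} {X : Set V} {x y : V} (h : RIn G X x y) :
    ∃ p : G.Walk x y, (∀ v ∈ p.support, v ∈ X) ∧ IndSeq G p.getVert p.length := by
  classical
  have hex : ∃ n, ∃ p : G.Walk x y, (∀ v ∈ p.support, v ∈ X) ∧ p.length = n := by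
    obtain ⟨p, hp⟩ := h
    exact ⟨_, p, hp, rfl⟩
  obtain ⟨p, hp, hl⟩ := Nat.find_spec hex
  have hmin : ∀ q : G.Walk x y, (∀ v ∈ q.support, v ∈ X) → p.length ≤ q.length := by
    intro q hq
    rw [hl]
    exact Nat.find_min' hex ⟨q, hq, rfl⟩
  have ht : ∀ i, ∀ v ∈ (p.take i).support, v ∈ X := by
    intro i v hv
    rw [Walk.mem_support_iff_exists_getVert] at hv
    obtain ⟨n, rfl, -⟩ := hv
    rw [Walk.take_getVert]
    exact hp _ (Walk.getVert_mem_support _ _)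
  have hd : ∀ i, ∀ v ∈ (p.drop i).support, v ∈ X := by
    intro i v hv
    rw [Walk.mem_support_iff_exists_getVert] at hv
    obtain ⟨n, rfl, -⟩ := hv
    rw [Walk.drop_getVert]
    exact hp _ (Walk.getVert_mem_support _ _)
  refine ⟨p, hp, ?_, ?_⟩
  · intro i j hij hj heq
    have := hmin ((p.take i).append ((p.drop j).copy heq.symm rfl)) (by
      intro v hv
      rw [Walk.mem_support_append_iff, Walk.support_copy] at hv
      exact hv.elim (ht i v) (hd j v))
    rw [Walk.length_append, Walk.length_copy, Walk.take_length, Walk.drop_length] at this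
    omega
  · intro i j hij hj
    constructor
    · intro hadj
      have := hmin ((p.take i).append (Walk.cons hadj (p.drop j))) (by
        intro v hv
        rw [Walk.mem_support_append_iff, Walk.support_cons, List.mem_cons] at hv
        rcases hv with hv | rfl | hv
        · exact ht i v hv
        · exact hp _ (Walk.getVert_mem_support _ _)
        · exact hd j v hv)
      rw [Walk.length_append, Walk.length_cons, Walk.take_length, Walk.drop_length] at this
      omega
    · rintro rfl
      exact p.adj_getVert_succ (by omega)

theorem IndSeq.adj {G : SimpleGraph V} {c : ℕ → V} {n : ℕ} (h : IndSeq G c n) {i j : ℕ}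
    (hi : i ≤ n) (hj : j ≤ n) (ha : G.Adj (c i) (c j)) : j = i + 1 ∨ i = j + 1 := by
  rcases lt_trichotomy i j with hij | rfl | hij
  · exact Or.inl ((h.2 i j hij hj).1 ha)
  · exact absurd ha (G.loopless.irrefl _)
  · exact Or.inr ((h.2 j i hij hi).1 ha.symm)

theorem IndSeq.inj {G : SimpleGraph V} {c : ℕ → V} {n : ℕ} (h : IndSeq G c n) {i j : ℕ}
    (hi : i ≤ n) (hj : j ≤ n) (ha : c i = c j) : i = j := by
  rcases lt_trichotomy i j with hij | rfl | hij
  · exact absurd ha (h.1 i j hij hj)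
  · rfl
  · exact absurd ha.symm (h.1 j i hij hi)

theorem IndSeq.shift {G : SimpleGraph V} {c : ℕ → V} {n : ℕ} (h : IndSeq G c n) {a m : ℕ}
    (hm : a + m ≤ n) : IndSeq G (fun k => c (a + k)) m := by
  refine ⟨fun i j hij hj => h.1 _ _ (by omega) (by omega), fun i j hij hj => ?_⟩
  rw [h.2 _ _ (by omega) (by omega)]
  omega

theorem edge_mem_of_getVert {G : SimpleGraph V} {x y : V} (p : G.Walk x y) (i : ℕ)
    (hi : i < p.length) : s(p.getVert i, p.getVert (i+1)) ∈ p.edges := by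
  induction p generalizing i with
  | nil => simp at hi
  | cons h p ih =>
    cases i with
    | zero => simp
    | succ i =>
      simp only [Walk.getVert_cons_succ, Walk.edges_cons, List.mem_cons]
      exact Or.inr (ih i (by simpa using hi))

/-- A leg: an induced path inside `X`. -/
theorem RIn.leg {G : SimpleGraph V} {X : Set V} {x y : V} (h : RIn G X x y) :
    ∃ p : G.Walk x y, p.IsPath ∧ (∀ v ∈ p.support, v ∈ X) ∧
      ∀ a b, a ∈ p.support → b ∈ p.support → G.Adj a b → s(a, b) ∈ p.edges := by
  obtain ⟨p, hp, hi⟩ := h.exists_ind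
  refine ⟨p, ?_, hp, ?_⟩
  · rw [← Walk.IsPath.getVert_injOn_iff]
    intro i hi' j hj' hij
    exact hi.inj hi' hj' hij
  · intro a b ha hb hab
    rw [Walk.mem_support_iff_exists_getVert] at ha hb
    obtain ⟨i, rfl, hi'⟩ := ha
    obtain ⟨j, rfl, hj'⟩ := hb
    rcases hi.adj hi' hj' hab with rfl | rfl
    · exact edge_mem_of_getVert p i (by omega)
    · rw [Sym2.eq_swap]
      exact edge_mem_of_getVert p j (by omega)

/-- Half of a theta with centre `o`. -/
def Claw (G : SimpleGraph V) (o : V) (x : Fin 3 → V) (A : Fin 3 → Set V) : Prop :=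
  (∀ i, o ∈ A i) ∧ (∀ i, x i ∈ A i) ∧ (∀ i, RIn G (A i) o (x i)) ∧
  ∀ i j, i ≠ j → ∀ v ∈ A i, ∀ w ∈ A j, (v = w ∨ G.Adj v w) → v = o ∨ w = o

/-- Half of a prism with triangle `o`. -/
def Tri (G : SimpleGraph V) (o : Fin 3 → V) (x : Fin 3 → V) (A : Fin 3 → Set V) : Prop :=
  (∀ i, o i ∈ A i) ∧ (∀ i, x i ∈ A i) ∧ (∀ i, RIn G (A i) (o i) (x i)) ∧
  (∀ i j, i ≠ j → G.Adj (o i) (o j)) ∧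
  ∀ i j, i ≠ j → ∀ v ∈ A i, ∀ w ∈ A j, (v = w ∨ G.Adj v w) → v = o i ∧ w = o j

/-- The two halves are linked by three prescribed edges only. -/
def Linked (G : SimpleGraph V) (x x' : Fin 3 → V) (A A' : Fin 3 → Set V) : Prop :=
  (∀ i, G.Adj (x i) (x' i)) ∧
  ∀ i j, ∀ v ∈ A i, ∀ w ∈ A' j, v ≠ w ∧ (G.Adj v w → ∃ k, v = x k ∧ w = x' k)

theorem Linked.symm {G : SimpleGraph V} {x x' : Fin 3 → V} {A A' : Fin 3 → Set V}
    (h : Linked G x x' A A') : Linked G x' x A' A := by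
  refine ⟨fun i => (h.1 i).symm, fun i j v hv w hw => ⟨(h.2 j i w hw v hv).1.symm, fun ha => ?_⟩⟩
  obtain ⟨k, h1, h2⟩ := (h.2 j i w hw v hv).2 ha.symm
  exact ⟨k, h2, h1⟩

theorem join_leg {G : SimpleGraph V} {X Y : Set V} {o x x' o' : V}
    (h1 : RIn G X o x) (h2 : RIn G Y o' x') (hx : x ∈ X) (hx' : x' ∈ Y) (ha : G.Adj x x') :
    RIn G (X ∪ Y) o o' :=
  ((h1.mono Set.subset_union_left).trans
    (RIn.step (Or.inl hx) (Or.inr hx') ha)).trans (h2.mono Set.subset_union_right).symm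

theorem theta_of {G : SimpleGraph V} {t : ℕ} {o o' : V} {x x' : Fin 3 → V}
    {A A' : Fin 3 → Set V} (h : Claw G o x A) (h' : Claw G o' x' A') (hl : Linked G x x' A A')
    (hd : t + 1 ≤ G.dist o o') : HasTTheta G t := by
  have hleg := fun i => (join_leg (h.2.2.1 i) (h'.2.2.1 i) (h.2.1 i) (h'.2.1 i) (hl.1 i)).leg
  choose p hpath hsub hind using hleg
  have key : ∀ i j, i ≠ j → ∀ v ∈ (p i).support, ∀ w ∈ (p j).support, (v = w ∨ G.Adj v w) →
      (v = o ∨ v = o') ∨ (w = o ∨ w = o') := by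
    intro i j hij v hv w hw hvw
    have cross : ∀ i j, i ≠ j → ∀ v ∈ A i, ∀ w ∈ A' j, (v = w ∨ G.Adj v w) →
        v = o ∨ w = o' := by
      intro i j hij v hv w hw hvw
      obtain ⟨hne, had⟩ := hl.2 i j v hv w hw
      obtain ⟨k, rfl, rfl⟩ := had (hvw.resolve_left hne)
      by_cases hk : k = i
      · subst hk
        exact Or.inr (by simpa using h'.2.2.2 k j hij _ (h'.2.1 k) _ hw (Or.inl rfl))
      · exact Or.inl (by simpa using h.2.2.2 k i hk _ (h.2.1 k) _ hv (Or.inl rfl))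
    rcases hsub i v hv with hv | hv <;> rcases hsub j w hw with hw | hw
    · have := h.2.2.2 i j hij v hv w hw hvw
      tauto
    · have := cross i j hij v hv w hw hvw
      tauto
    · have := cross j i hij.symm w hw v hv (hvw.imp Eq.symm fun e => e.symm)
      tauto
    · have := h'.2.2.2 i j hij v hv w hw hvw
      tauto
  have kint : ∀ i j, i ≠ j → ∀ v, v ∈ (p i).support → v ∈ (p j).support → v = o ∨ v = o' := by
    intro i j hij v hv hw
    simpa using key i j hij v hv v hw (Or.inl rfl)
  have hedge : ∀ i j v w, v ∈ (p i).support → w ∈ (p j).support → G.Adj v w →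
      s(v, w) ∈ (p i).edges ∨ s(v, w) ∈ (p j).edges := by
    intro i j v w hv hw hvw
    by_cases hij : i = j
    · subst hij
      exact Or.inl (hind i v w hv hw hvw)
    · rcases key i j hij v hv w hw (Or.inr hvw) with (rfl | rfl) | (rfl | rfl)
      · exact Or.inr (hind j _ _ (p j).start_mem_support hw hvw)
      · exact Or.inr (hind j _ _ (p j).end_mem_support hw hvw)
      · exact Or.inl (hind i _ _ hv (p i).start_mem_support hvw)
      · exact Or.inl (hind i _ _ hv (p i).end_mem_support hvw)
  refine ⟨o, o', p 0, p 1, p 2, hpath 0, hpath 1, hpath 2, hd.trans (dist_le _),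
    hd.trans (dist_le _), hd.trans (dist_le _), kint 0 1 (by decide), kint 0 2 (by decide),
    kint 1 2 (by decide), ?_⟩
  rintro v w (hv | hv | hv) (hw | hw | hw) hvw <;>
  · have := hedge _ _ v w hv hw hvw
    tauto

theorem pyramid_of {G : SimpleGraph V} {t : ℕ} {o : Fin 3 → V} {o' : V} {x x' : Fin 3 → V}
    {A A' : Fin 3 → Set V} (h : Tri G o x A) (h' : Claw G o' x' A') (hl : Linked G x x' A A')
    (hd : ∀ i, t + 1 ≤ G.dist (o i) o') : HasTPyramid G t := by
  have hleg := fun i => (join_leg (h.2.2.1 i) (h'.2.2.1 i) (h.2.1 i) (h'.2.1 i) (hl.1 i)).symm.leg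
  choose p hpath hsub hind using hleg
  have key : ∀ i j, i ≠ j → ∀ v ∈ (p i).support, ∀ w ∈ (p j).support, (v = w ∨ G.Adj v w) →
      (v = o' ∨ w = o') ∨ (v = o i ∧ w = o j) := by
    intro i j hij v hv w hw hvw
    have cross : ∀ i j, i ≠ j → ∀ v ∈ A i, ∀ w ∈ A' j, (v = w ∨ G.Adj v w) →
        w = o' := by
      intro i j hij v hv w hw hvw
      obtain ⟨hne, had⟩ := hl.2 i j v hv w hw
      obtain ⟨k, rfl, rfl⟩ := had (hvw.resolve_left hne)
      by_cases hk : k = i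
      · subst hk
        simpa using h'.2.2.2 k j hij _ (h'.2.1 k) _ hw (Or.inl rfl)
      · have h3 := h.2.2.2.2 k i hk _ (h.2.1 k) _ hv (Or.inl rfl)
        exact absurd (h3.1.symm.trans h3.2) (h.2.2.2.1 k i hk).ne
    rcases hsub i v hv with hv | hv <;> rcases hsub j w hw with hw | hw
    · exact Or.inr (h.2.2.2.2 i j hij v hv w hw hvw)
    · have := cross i j hij v hv w hw hvw
      tauto
    · have := cross j i hij.symm w hw v hv (hvw.imp Eq.symm fun e => e.symm)
      tauto
    · have := h'.2.2.2 i j hij v hv w hw hvw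
      tauto
  have kint : ∀ i j, i ≠ j → ∀ v, v ∈ (p i).support → v ∈ (p j).support → v = o' := by
    intro i j hij v hv hw
    rcases key i j hij v hv v hw (Or.inl rfl) with h3 | h3
    · simpa using h3
    · exact absurd (h3.1.symm.trans h3.2) (h.2.2.2.1 i j hij).ne
  have hedge : ∀ i j v w, v ∈ (p i).support → w ∈ (p j).support → G.Adj v w →
      s(v, w) ∈ (p i).edges ∨ s(v, w) ∈ (p j).edges ∨ (i ≠ j ∧ v = o i ∧ w = o j) := by
    intro i j v w hv hw hvw
    by_cases hij : i = j
    · subst hij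
      exact Or.inl (hind i v w hv hw hvw)
    · rcases key i j hij v hv w hw (Or.inr hvw) with (rfl | rfl) | ⟨h1, h2⟩
      · exact Or.inr (Or.inl (hind j _ _ (p j).start_mem_support hw hvw))
      · exact Or.inl (hind i _ _ hv (p i).start_mem_support hvw)
      · exact Or.inr (Or.inr ⟨hij, h1, h2⟩)
  have hlen : ∀ i, t + 1 ≤ (p i).length := fun i => by
    have := hd i
    rw [SimpleGraph.dist_comm] at this
    exact this.trans (dist_le _)
  refine ⟨o', o 0, o 1, o 2, p 0, p 1, p 2, hpath 0, hpath 1, hpath 2, by linarith [hlen 0],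
    by linarith [hlen 1], by linarith [hlen 2], Or.inl ⟨hlen 0, hlen 1⟩,
    kint 0 1 (by decide), kint 0 2 (by decide),
    kint 1 2 (by decide), h.2.2.2.1 _ _ (by decide), h.2.2.2.1 _ _ (by decide),
    h.2.2.2.1 _ _ (by decide), ?_⟩
  rintro v w (hv | hv | hv) (hw | hw | hw) hvw <;>
  · rcases hedge _ _ v w hv hw hvw with h3 | h3 | ⟨h3, rfl, rfl⟩
    · tauto
    · tauto
    · simp at h3 ⊢

theorem prism_of {G : SimpleGraph V} {t : ℕ} {o o' : Fin 3 → V} {x x' : Fin 3 → V}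
    {A A' : Fin 3 → Set V} (h : Tri G o x A) (h' : Tri G o' x' A') (hl : Linked G x x' A A')
    (hd : ∀ i, t + 1 ≤ G.dist (o i) (o' i)) : HasTPrism G t := by
  have hleg := fun i => (join_leg (h.2.2.1 i) (h'.2.2.1 i) (h.2.1 i) (h'.2.1 i) (hl.1 i)).leg
  choose p hpath hsub hind using hleg
  have key : ∀ i j, i ≠ j → ∀ v ∈ (p i).support, ∀ w ∈ (p j).support, (v = w ∨ G.Adj v w) →
      (v = o i ∧ w = o j) ∨ (v = o' i ∧ w = o' j) := by
    intro i j hij v hv w hw hvw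
    have cross : ∀ i j, i ≠ j → ∀ v ∈ A i, ∀ w ∈ A' j, (v = w ∨ G.Adj v w) → False := by
      intro i j hij v hv w hw hvw
      obtain ⟨hne, had⟩ := hl.2 i j v hv w hw
      obtain ⟨k, rfl, rfl⟩ := had (hvw.resolve_left hne)
      by_cases hk : k = i
      · subst hk
        have h3 := h'.2.2.2.2 k j hij _ (h'.2.1 k) _ hw (Or.inl rfl)
        exact absurd (h3.1.symm.trans h3.2) (h'.2.2.2.1 k j hij).ne
      · have h3 := h.2.2.2.2 k i hk _ (h.2.1 k) _ hv (Or.inl rfl)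
        exact absurd (h3.1.symm.trans h3.2) (h.2.2.2.1 k i hk).ne
    rcases hsub i v hv with hv | hv <;> rcases hsub j w hw with hw | hw
    · exact Or.inl (h.2.2.2.2 i j hij v hv w hw hvw)
    · exact (cross i j hij v hv w hw hvw).elim
    · exact (cross j i hij.symm w hw v hv (hvw.imp Eq.symm fun e => e.symm)).elim
    · exact Or.inr (h'.2.2.2.2 i j hij v hv w hw hvw)
  have kint : ∀ i j, i ≠ j → ∀ v, v ∈ (p i).support → v ∉ (p j).support := by
    intro i j hij v hv hw
    rcases key i j hij v hv v hw (Or.inl rfl) with h3 | h3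
    · exact absurd (h3.1.symm.trans h3.2) (h.2.2.2.1 i j hij).ne
    · exact absurd (h3.1.symm.trans h3.2) (h'.2.2.2.1 i j hij).ne
  have hedge : ∀ i j v w, v ∈ (p i).support → w ∈ (p j).support → G.Adj v w →
      s(v, w) ∈ (p i).edges ∨ (i ≠ j ∧ v = o i ∧ w = o j) ∨ (i ≠ j ∧ v = o' i ∧ w = o' j) := by
    intro i j v w hv hw hvw
    by_cases hij : i = j
    · subst hij
      exact Or.inl (hind i v w hv hw hvw)
    · rcases key i j hij v hv w hw (Or.inr hvw) with h3 | h3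
      · exact Or.inr (Or.inl ⟨hij, h3⟩)
      · exact Or.inr (Or.inr ⟨hij, h3⟩)
  have hlen : ∀ i, t ≤ (p i).length := fun i => by
    have := (hd i).trans (dist_le (p i))
    omega
  refine ⟨o 0, o 1, o 2, o' 0, o' 1, o' 2, p 0, p 1, p 2, hpath 0, hpath 1, hpath 2, hlen 0,
    hlen 1, hlen 2, kint 0 1 (by decide), kint 0 2 (by decide),
    kint 1 2 (by decide), h.2.2.2.1 _ _ (by decide), h.2.2.2.1 _ _ (by decide),
    h.2.2.2.1 _ _ (by decide), h'.2.2.2.1 _ _ (by decide), h'.2.2.2.1 _ _ (by decide),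
    h'.2.2.2.1 _ _ (by decide), ?_⟩
  rintro v w (hv | hv | hv) (hw | hw | hw) hvw <;>
  · rcases hedge _ _ v w hv hw hvw with h3 | ⟨h3, rfl, rfl⟩ | ⟨h3, rfl, rfl⟩
    · tauto
    · simp at h3 ⊢
    · simp at h3 ⊢

/-- Where a connected set `M`, attached through `u` only, meets an induced path. -/
theorem side_of {G : SimpleGraph V} {c : ℕ → V} {n : ℕ} (hc : IndSeq G c n) {M : Set V} {u m : V}
    (hu : u ∈ M) (hm : m ∈ M) (hM : RIn G M u m)
    (hdis : ∀ k ≤ n, c k ∉ M) (hon : ∀ v ∈ M, ∀ k ≤ n, G.Adj v (c k) → v = u)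
    (hex : ∃ k ≤ n, G.Adj u (c k)) :
    ∃ A : Fin 3 → Set V, (∀ i, ∀ v ∈ A i, v ∈ M ∨ ∃ k ≤ n, v = c k) ∧
      ((∃ o, Claw G o ![c 0, m, c n] A ∧ (o = u ∨ (G.Adj u o ∧ ∃ k ≤ n, o = c k))) ∨
       (∃ o, Tri G o ![c 0, m, c n] A ∧ ∀ i, (o i = u ∨ (G.Adj u (o i) ∧ ∃ k ≤ n, o i = c k)))) := by
  classical
  obtain ⟨l, ⟨hln, hl⟩, hlmin⟩ : ∃ l, (l ≤ n ∧ G.Adj u (c l)) ∧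
      ∀ k, k ≤ n → G.Adj u (c k) → l ≤ k :=
    ⟨Nat.find hex, Nat.find_spec hex, fun k h1 h2 => Nat.find_min' hex ⟨h1, h2⟩⟩
  obtain ⟨h, ⟨hhn, hh⟩, hmax⟩ : ∃ l, (l ≤ n ∧ G.Adj u (c l)) ∧
      ∀ k, k ≤ n → G.Adj u (c k) → k ≤ l := by
    obtain ⟨k, hk, hk'⟩ := hex
    exact ⟨Nat.findGreatest (fun k => G.Adj u (c k)) n, ⟨Nat.findGreatest_le n,
      Nat.findGreatest_spec (P := fun k => G.Adj u (c k)) hk hk'⟩,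
      fun k h1 h2 => Nat.le_findGreatest h1 h2⟩
  have hlh : l ≤ h := hlmin h hhn hh
  have hadj : ∀ k, k < n → G.Adj (c k) (c (k+1)) := fun k hk => (hc.2 k (k+1) (by omega) hk).2 rfl
  have left : ∀ X : Set V, (∀ k ≤ l, c k ∈ X) → RIn G X (c l) (c 0) := fun X hX =>
    (RIn.seq c 0 l (Nat.zero_le _) (fun k _ h2 => hX k h2) (fun k _ h2 => hadj k (by omega))).symm
  have right : ∀ X : Set V, (∀ k, h ≤ k → k ≤ n → c k ∈ X) → RIn G X (c h) (c n) := fun X hX =>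
    RIn.seq c h n hhn (fun k h1 h2 => hX k h1 h2) (fun k _ h2 => hadj k h2)
  have fin3 : ∀ P : Fin 3 → Fin 3 → Prop, (∀ i j, P i j → P j i) → P 0 1 → P 0 2 → P 1 2 →
      ∀ i j, i ≠ j → P i j := by
    intro P hs h01 h02 h12 i j hij
    fin_cases i <;> fin_cases j <;> first | exact absurd rfl hij | assumption | (apply hs; assumption)
  have cc : ∀ i j, i ≤ n → j ≤ n → (c i = c j ∨ G.Adj (c i) (c j)) → i ≤ j + 1 ∧ j ≤ i + 1 := by
    rintro i j hi hj (h1 | h1)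
    · have := hc.inj hi hj h1
      omega
    · have := hc.adj hi hj h1
      omega
  have mc : ∀ v ∈ M, ∀ k ≤ n, (v = c k ∨ G.Adj v (c k)) → v = u ∧ l ≤ k ∧ k ≤ h := by
    rintro v hv k hk (rfl | h1)
    · exact absurd hv (hdis k hk)
    · obtain rfl := hon v hv k hk h1
      exact ⟨rfl, hlmin k hk h1, hmax k hk h1⟩
  rcases Nat.lt_or_ge h (l + 2) with hcase | hcase
  · rcases Nat.lt_or_ge h (l + 1) with hcase' | hcase'
    · -- one neighbour
      obtain rfl : h = l := by omega
      refine ⟨![{v | ∃ k ≤ h, v = c k}, M ∪ {c h}, {v | ∃ k, h ≤ k ∧ k ≤ n ∧ v = c k}], ?_,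
        Or.inl ⟨c h, ⟨?_, ?_, ?_, ?_⟩, Or.inr ⟨hl, h, hhn, rfl⟩⟩⟩
      · intro i v hv
        fin_cases i
        · obtain ⟨k, hk, rfl⟩ := hv
          exact Or.inr ⟨k, by omega, rfl⟩
        · rcases hv with hv | rfl
          · exact Or.inl hv
          · exact Or.inr ⟨h, hhn, rfl⟩
        · obtain ⟨k, hk, hk', rfl⟩ := hv
          exact Or.inr ⟨k, by omega, rfl⟩
      · intro i
        fin_cases i
        · exact ⟨h, le_rfl, rfl⟩
        · exact Or.inr rfl
        · exact ⟨h, le_rfl, hhn, rfl⟩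
      · intro i
        fin_cases i
        · exact ⟨0, Nat.zero_le _, rfl⟩
        · exact Or.inl hm
        · exact ⟨n, hhn, le_rfl, rfl⟩
      · intro i
        fin_cases i
        · exact left _ fun k hk => ⟨k, hk, rfl⟩
        · exact (RIn.step (X := M ∪ {c h}) (Or.inr rfl) (Or.inl hu) hl.symm).trans
            (hM.mono Set.subset_union_left)
        · exact right _ fun k h1 h2 => ⟨k, h1, h2, rfl⟩
      · apply fin3
        · intro i j hij v hv w hw hvw
          exact (hij w hw v hv (hvw.imp Eq.symm fun e => e.symm)).symm
        · rintro v ⟨k, hk, rfl⟩ w (hw | rfl) hvw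
          · have := mc w hw k (by omega) (hvw.imp Eq.symm fun e => e.symm)
            obtain rfl : k = h := by omega
            exact Or.inl rfl
          · exact Or.inr rfl
        · rintro v ⟨k, hk, rfl⟩ w ⟨k', hk1, hk2, rfl⟩ hvw
          have := cc k k' (by omega) hk2 hvw
          have : k = h ∨ k' = h := by omega
          rcases this with rfl | rfl
          · exact Or.inl rfl
          · exact Or.inr rfl
        · rintro v (hv | rfl) w ⟨k', hk1, hk2, rfl⟩ hvw
          · have := mc v hv k' (by omega) hvw
            obtain rfl : k' = h := by omega
            exact Or.inr rfl
          · exact Or.inl rfl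
    · -- two adjacent neighbours
      obtain rfl : h = l + 1 := by omega
      refine ⟨![{v | ∃ k ≤ l, v = c k}, M, {v | ∃ k, l + 1 ≤ k ∧ k ≤ n ∧ v = c k}], ?_,
        Or.inr ⟨![c l, u, c (l+1)], ⟨?_, ?_, ?_, ?_, ?_⟩, ?_⟩⟩
      · intro i v hv
        fin_cases i
        · obtain ⟨k, hk, rfl⟩ := hv
          exact Or.inr ⟨k, by omega, rfl⟩
        · exact Or.inl hv
        · obtain ⟨k, hk, hk', rfl⟩ := hv
          exact Or.inr ⟨k, by omega, rfl⟩
      · intro i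
        fin_cases i
        · exact ⟨l, le_rfl, rfl⟩
        · exact hu
        · exact ⟨l+1, le_rfl, hhn, rfl⟩
      · intro i
        fin_cases i
        · exact ⟨0, Nat.zero_le _, rfl⟩
        · exact hm
        · exact ⟨n, hhn, le_rfl, rfl⟩
      · intro i
        fin_cases i
        · exact left _ fun k hk => ⟨k, hk, rfl⟩
        · exact hM
        · exact right _ fun k h1 h2 => ⟨k, h1, h2, rfl⟩
      · apply fin3
        · intro i j hij
          exact hij.symm
        · exact hl.symm
        · exact hadj l (by omega)
        · exact hh
      · apply fin3
        · intro i j hij v hv w hw hvw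
          exact (hij w hw v hv (hvw.imp Eq.symm fun e => e.symm)).symm
        · rintro v ⟨k, hk, rfl⟩ w hw hvw
          have := mc w hw k (by omega) (hvw.imp Eq.symm fun e => e.symm)
          obtain rfl : k = l := by omega
          exact ⟨rfl, this.1⟩
        · rintro v ⟨k, hk, rfl⟩ w ⟨k', hk1, hk2, rfl⟩ hvw
          have := cc k k' (by omega) hk2 hvw
          obtain rfl : k = l := by omega
          obtain rfl : k' = k + 1 := by omega
          exact ⟨rfl, rfl⟩
        · rintro v hv w ⟨k', hk1, hk2, rfl⟩ hvw
          have := mc v hv k' (by omega) hvw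
          obtain rfl : k' = l + 1 := by omega
          exact ⟨this.1, rfl⟩
      · intro i
        fin_cases i
        · exact Or.inr ⟨hl, l, hln, rfl⟩
        · exact Or.inl rfl
        · exact Or.inr ⟨hh, l+1, hhn, rfl⟩
  · -- far neighbours
    refine ⟨![{v | ∃ k ≤ l, v = c k} ∪ {u}, M, {v | ∃ k, h ≤ k ∧ k ≤ n ∧ v = c k} ∪ {u}], ?_,
        Or.inl ⟨u, ⟨?_, ?_, ?_, ?_⟩, Or.inl rfl⟩⟩
    · intro i v hv
      fin_cases i
      · rcases hv with ⟨k, hk, rfl⟩ | rfl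
        · exact Or.inr ⟨k, by omega, rfl⟩
        · exact Or.inl hu
      · exact Or.inl hv
      · rcases hv with ⟨k, hk, hk', rfl⟩ | rfl
        · exact Or.inr ⟨k, by omega, rfl⟩
        · exact Or.inl hu
    · intro i
      fin_cases i
      · exact Or.inr rfl
      · exact hu
      · exact Or.inr rfl
    · intro i
      fin_cases i
      · exact Or.inl ⟨0, Nat.zero_le _, rfl⟩
      · exact hm
      · exact Or.inl ⟨n, hhn, le_rfl, rfl⟩
    · intro i
      fin_cases i
      · exact (RIn.step (X := {v | ∃ k ≤ l, v = c k} ∪ {u}) (Or.inr rfl) (Or.inl ⟨l, le_rfl, rfl⟩) hl).trans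
          (left _ fun k hk => Or.inl ⟨k, hk, rfl⟩)
      · exact hM
      · exact (RIn.step (X := {v | ∃ k, h ≤ k ∧ k ≤ n ∧ v = c k} ∪ {u}) (Or.inr rfl) (Or.inl ⟨h, le_rfl, hhn, rfl⟩) hh).trans
          (right _ fun k h1 h2 => Or.inl ⟨k, h1, h2, rfl⟩)
    · apply fin3
      · intro i j hij v hv w hw hvw
        exact (hij w hw v hv (hvw.imp Eq.symm fun e => e.symm)).symm
      · rintro v (⟨k, hk, rfl⟩ | rfl) w hw hvw
        · exact Or.inr (mc w hw k (by omega) (hvw.imp Eq.symm fun e => e.symm)).1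
        · exact Or.inl rfl
      · rintro v (⟨k, hk, rfl⟩ | rfl) w (⟨k', hk1, hk2, rfl⟩ | rfl) hvw
        · have := cc k k' (by omega) hk2 hvw
          omega
        · exact Or.inr rfl
        · exact Or.inl rfl
        · exact Or.inl rfl
      · rintro v hv w (⟨k', hk1, hk2, rfl⟩ | rfl) hvw
        · exact Or.inl (mc v hv k' (by omega) hvw).1
        · exact Or.inr rfl

theorem geo_dist {G : SimpleGraph V} (hG : G.Connected) {x y : V} (p : G.Walk x y)
    (hp : p.length = G.dist x y) {i j : ℕ} (hij : i ≤ j) (hj : j ≤ p.length) :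
    G.dist (p.getVert i) (p.getVert j) = j - i := by
  have h1 : G.dist x (p.getVert i) ≤ i := by
    have := dist_le (p.take i)
    rw [Walk.take_length] at this
    omega
  have h2 : G.dist (p.getVert j) y ≤ p.length - j := by
    have := dist_le (p.drop j)
    rwa [Walk.drop_length] at this
  have h3 : G.dist (p.getVert i) (p.getVert j) ≤ j - i := by
    have := dist_le ((p.drop i).take (j - i))
    rw [Walk.take_length, Walk.drop_length, Walk.drop_getVert] at this
    rw [show i + (j - i) = j by omega] at this
    omega
  have h4 := hG.dist_triangle (u := x) (v := p.getVert i) (w := y)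
  have h5 := hG.dist_triangle (u := p.getVert i) (v := p.getVert j) (w := y)
  omega

/-- The tail of a geodesic from `P y` to `r` after its last contact with `P`. -/
theorem exists_tail {G : SimpleGraph V} (hG : G.Connected) (r : V) (P : ℕ → V) (N : ℕ)
    (hN : 1 ≤ N) (hPd : ∀ i j, i ≤ j → j ≤ N → G.dist (P i) (P j) = j - i) (y : ℕ) (hy : y ≤ N) :
    ∃ (w : V) (T : Set V), w ∈ T ∧ r ∈ T ∧ (∀ v ∈ T, RIn G T v r) ∧
      (∀ v ∈ T, ∀ q ≤ N, G.Adj v (P q) → v = w) ∧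
      (∀ v ∈ T, ∀ q ≤ N, v = P q → v = r ∧ v = w) ∧
      (∀ v ∈ T, G.dist r w = G.dist w v + G.dist r v) ∧
      (∃ q ≤ N, G.Adj w (P q)) ∧
      (∀ q ≤ N, G.Adj w (P q) →
        (y ≤ q → G.dist r (P q) + q ≤ G.dist r (P y) + y + 2) ∧
        (q ≤ y → G.dist r (P q) + y ≤ G.dist r (P y) + q + 2)) := by
  classical
  obtain ⟨Q, hQ⟩ := hG.exists_walk_length_eq_dist (P y) r
  have hPadj : ∀ q, q < N → G.Adj (P q) (P (q+1)) := fun q hq => by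
    rw [← dist_eq_one_iff_adj, hPd q (q+1) (by omega) hq]
    omega
  have hPn : ∀ q ≤ N, ∃ q' ≤ N, G.Adj (P q) (P q') := by
    intro q hq
    rcases Nat.lt_or_ge q N with h | h
    · exact ⟨q+1, h, hPadj q h⟩
    · refine ⟨q - 1, by omega, ?_⟩
      have := hPadj (q - 1) (by omega)
      rw [show q - 1 + 1 = q by omega] at this
      exact this.symm
  set n := Q.length with hn
  let C : ℕ → Prop := fun k => ∃ q ≤ N, G.Adj (Q.getVert k) (P q)
  have hC0 : C 0 := by
    change ∃ q ≤ N, G.Adj (Q.getVert 0) (P q)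
    rw [Walk.getVert_zero]
    exact hPn y hy
  obtain ⟨k, hkn, hCk, hkmax⟩ : ∃ k, k ≤ n ∧ C k ∧ ∀ j ≤ n, C j → j ≤ k :=
    ⟨Nat.findGreatest C n, Nat.findGreatest_le n, Nat.findGreatest_spec (Nat.zero_le n) hC0,
      fun j h1 h2 => Nat.le_findGreatest h1 h2⟩
  have hQr : ∀ j ≤ n, G.dist r (Q.getVert j) = n - j := by
    intro j hj
    have := geo_dist hG Q hQ hj le_rfl
    rwa [Walk.getVert_length, SimpleGraph.dist_comm] at this
  have hQadj : ∀ j < n, G.Adj (Q.getVert j) (Q.getVert (j+1)) := fun j hj => Q.adj_getVert_succ hj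
  refine ⟨Q.getVert k, {v | ∃ j, k ≤ j ∧ j ≤ n ∧ v = Q.getVert j}, ⟨k, le_rfl, hkn, rfl⟩,
    ⟨n, hkn, le_rfl, by rw [hn, Walk.getVert_length]⟩, ?_, ?_, ?_, ?_, hCk, ?_⟩
  · rintro v ⟨j, h1, h2, rfl⟩
    have := RIn.seq (G := G) (X := {v | ∃ j, k ≤ j ∧ j ≤ n ∧ v = Q.getVert j}) Q.getVert j n h2
      (fun i h3 h4 => ⟨i, by omega, h4, rfl⟩) (fun i h3 h4 => hQadj i h4)
    rwa [hn, Walk.getVert_length] at this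
  · rintro v ⟨j, h1, h2, rfl⟩ q hq ha
    have := hkmax j h2 ⟨q, hq, ha⟩
    rw [show j = k by omega]
  · rintro v ⟨j, h1, h2, rfl⟩ q hq he
    obtain ⟨q', hq', ha⟩ := hPn q hq
    have := hkmax j h2 ⟨q', hq', by rw [he]; exact ha⟩
    obtain rfl : j = k := by omega
    refine ⟨?_, rfl⟩
    rcases Nat.lt_or_ge j n with h | h
    · have h4 := hkmax (j+1) h ⟨q, hq, by rw [← he]; exact (hQadj j h).symm⟩
      omega
    · rw [show j = n by omega, hn, Walk.getVert_length]
  · rintro v ⟨j, h1, h2, rfl⟩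
    rw [hQr k hkn, hQr j h2, geo_dist hG Q hQ h1 h2]
    omega
  · intro q hq ha
    have h1 := hQr k hkn
    have h2 := hQr 0 (Nat.zero_le _)
    rw [Walk.getVert_zero] at h2
    have h3 := geo_dist hG Q hQ (Nat.zero_le k) hkn
    rw [Walk.getVert_zero] at h3
    have h4 : G.dist (Q.getVert k) (P q) = 1 := dist_eq_one_iff_adj.2 ha
    have h5 := hG.dist_triangle (u := P y) (v := Q.getVert k) (w := P q)
    have h6 := hG.dist_triangle (u := r) (v := Q.getVert k) (w := P q)
    constructor
    · intro h
      have := hPd y q h hq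
      omega
    · intro h
      have := hPd q y h hy
      rw [SimpleGraph.dist_comm] at this
      omega

/-- Greedy decomposition into good intervals. -/
theorem greedy (F : ℕ → ℕ) (N : ℕ) (hF1 : ∀ a b, a ≤ b → b ≤ N → F a + a ≤ F b + b)
    (hF2 : ∀ a b, a ≤ b → b ≤ N → F b + a ≤ F a + b) (k : ℕ) : ∀ s ≤ N,
    (∃ I : Finset (ℕ × ℕ), I.card ≤ k ∧
      (∀ z ∈ I, z.1 ≤ z.2 ∧ z.2 ≤ N ∧ (F z.1 + z.1 = F z.2 + z.2 ∨ F z.2 + z.1 = F z.1 + z.2)) ∧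
      ∀ q, s ≤ q → q ≤ N → ∃ z ∈ I, z.1 ≤ q ∧ q ≤ z.2) ∨
    (∃ y : ℕ → ℕ, y 0 = s ∧ (∀ i ≤ k, y i ≤ N) ∧ ∀ i < k, y i ≤ y (i+1) ∧
      F (y i) + y i + 1 ≤ F (y (i+1)) + y (i+1) ∧
      F (y (i+1)) + y i + 1 ≤ F (y i) + y (i+1)) := by
  classical
  induction k with
  | zero =>
    intro s hs
    exact Or.inr ⟨fun _ => s, rfl, fun _ _ => hs, fun i hi => absurd hi (by omega)⟩
  | succ k ih =>
    intro s hs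
    let B : ℕ → Prop := fun b => s ≤ b ∧ b ≤ N ∧ ¬ (F s + s = F b + b ∨ F b + s = F s + b)
    by_cases hB : ∃ b, B b
    · obtain ⟨b, ⟨hsb, hbN, hb⟩, hmin⟩ : ∃ b, B b ∧ ∀ b', B b' → b ≤ b' :=
        ⟨Nat.find hB, Nat.find_spec hB, fun b' h => Nat.find_min' hB h⟩
      have hne : s < b := by
        rcases Nat.lt_or_ge s b with h | h
        · exact h
        · obtain rfl : s = b := by omega
          simp at hb
      rcases ih b hbN with ⟨I, hc, hI, hcov⟩ | ⟨y, hy0, hyN, hy⟩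
      · left
        refine ⟨insert (s, b - 1) I, (Finset.card_insert_le _ _).trans (by omega), ?_, ?_⟩
        · intro z hz
          rw [Finset.mem_insert] at hz
          rcases hz with rfl | hz
          · refine ⟨by simp only; omega, by simp only; omega, ?_⟩
            by_contra hcon
            have := hmin (b - 1) ⟨by omega, by omega, hcon⟩
            omega
          · exact hI z hz
        · intro q h1 h2
          rcases Nat.lt_or_ge q b with h | h
          · exact ⟨(s, b-1), Finset.mem_insert_self _ _, h1, by simp only; omega⟩
          · obtain ⟨z, hz, hz'⟩ := hcov q h h2
            exact ⟨z, Finset.mem_insert_of_mem hz, hz'⟩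
      · right
        have e1 := hF1 s b hsb hbN
        have e2 := hF2 s b hsb hbN
        refine ⟨fun i => if i = 0 then s else y (i - 1), by simp, ?_, ?_⟩
        · intro i hi
          rcases i with _ | i
          · simpa using hs
          · simpa using hyN i (by omega)
        · intro i hi
          rcases i with _ | i
          · simp only [hy0, if_true, zero_add, one_ne_zero, if_false, Nat.sub_self]
            omega
          · simpa using hy i (by omega)
    · left
      refine ⟨{(s, N)}, by simp, ?_, ?_⟩
      · intro z hz
        rw [Finset.mem_singleton] at hz
        subst hz
        refine ⟨hs, le_rfl, ?_⟩
        by_contra hcon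
        exact hB ⟨N, hs, le_rfl, hcon⟩
      · intro q h1 h2
        exact ⟨(s, N), by simp, h1, h2⟩

theorem deficit (F : ℕ → ℕ) (y : ℕ → ℕ) (k : ℕ)
    (hy : ∀ i < k, y i ≤ y (i+1) ∧
      F (y i) + y i + 1 ≤ F (y (i+1)) + y (i+1) ∧
      F (y (i+1)) + y i + 1 ≤ F (y i) + y (i+1)) (i d : ℕ) (h : i + d ≤ k) :
    y i ≤ y (i+d) ∧ F (y i) + y i + d ≤ F (y (i+d)) + y (i+d) ∧
      F (y (i+d)) + y i + d ≤ F (y i) + y (i+d) := by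
  induction d with
  | zero => simp
  | succ d ih =>
    have h1 := ih (by omega)
    have h2 := hy (i + d) (by omega)
    rw [← add_assoc]
    omega

/-- A good interval of an isometric path is covered by a rooted isometric path. -/
theorem cover_interval {G : SimpleGraph V} (hG : G.Connected) (r : V) {x y : V} (p : G.Walk x y)
    (a b : ℕ) (hab : a ≤ b) (hb : b ≤ p.length)
    (h : G.dist r (p.getVert a) + a = G.dist r (p.getVert b) + b ∨
      G.dist r (p.getVert b) + a = G.dist r (p.getVert a) + b) :
    ∃ q : Σ v : V, G.Walk r v, IsIsometricPath G q.2 ∧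
      ∀ k, a ≤ k → k ≤ b → p.getVert k ∈ q.2.support := by
  have hseg : ∃ s : G.Walk (p.getVert a) (p.getVert b), s.length = b - a ∧
      ∀ k, a ≤ k → k ≤ b → p.getVert k ∈ s.support := by
    refine ⟨((p.drop a).take (b - a)).copy rfl ?_, ?_, ?_⟩
    · rw [Walk.drop_getVert, show a + (b - a) = b by omega]
    · rw [Walk.length_copy, Walk.take_length, Walk.drop_length]
      omega
    · intro k h1 h2
      rw [Walk.support_copy, Walk.mem_support_iff_exists_getVert]
      refine ⟨k - a, ?_, ?_⟩
      · rw [Walk.take_getVert, Walk.drop_getVert]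
        congr 1
        omega
      · rw [Walk.take_length, Walk.drop_length]
        omega
  obtain ⟨s, hs, hsup⟩ := hseg
  rcases h with h | h
  · obtain ⟨q, hq⟩ := hG.exists_walk_length_eq_dist r (p.getVert b)
    have hl : (q.append s.reverse).length = G.dist r (p.getVert a) := by
      rw [Walk.length_append, Walk.length_reverse]
      omega
    refine ⟨⟨_, q.append s.reverse⟩, ⟨Walk.isPath_of_length_eq_dist _ hl, hl⟩, fun k h1 h2 => ?_⟩
    rw [Walk.mem_support_append_iff]
    right
    simpa using hsup k h1 h2
  · obtain ⟨q, hq⟩ := hG.exists_walk_length_eq_dist r (p.getVert a)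
    have hl : (q.append s).length = G.dist r (p.getVert b) := by
      rw [Walk.length_append]
      omega
    refine ⟨⟨_, q.append s⟩, ⟨Walk.isPath_of_length_eq_dist _ hl, hl⟩, fun k h1 h2 => ?_⟩
    rw [Walk.mem_support_append_iff]
    right
    exact hsup k h1 h2

theorem three_of {G : SimpleGraph V} (hG : G.Connected) (r : V) (t : ℕ) (P : ℕ → V) (N : ℕ)
    (hPd : ∀ i j, i ≤ j → j ≤ N → G.dist (P i) (P j) = j - i)
    (y : ℕ → ℕ) (k : ℕ) (hk : 4 * t + 36 ≤ k) (hyN : ∀ i ≤ k, y i ≤ N)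
    (hy : ∀ i < k, y i ≤ y (i+1) ∧
      G.dist r (P (y i)) + y i + 1 ≤ G.dist r (P (y (i+1))) + y (i+1) ∧
      G.dist r (P (y (i+1))) + y i + 1 ≤ G.dist r (P (y i)) + y (i+1)) :
    HasTTheta G t ∨ HasTPyramid G t ∨ HasTPrism G t := by
  classical
  set F : ℕ → ℕ := fun q => G.dist r (P q) with hF
  have hF1 : ∀ a b, a ≤ b → b ≤ N → F a + a ≤ F b + b := by
    intro a b hab hb
    have h1 := hPd a b hab hb
    have h2 := hG.dist_triangle (u := r) (v := P b) (w := P a)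
    rw [SimpleGraph.dist_comm (u := P b)] at h2
    simp only [hF]
    omega
  have hF2 : ∀ a b, a ≤ b → b ≤ N → F b + a ≤ F a + b := by
    intro a b hab hb
    have h1 := hPd a b hab hb
    have h2 := hG.dist_triangle (u := r) (v := P a) (w := P b)
    simp only [hF]
    omega
  have hdef := deficit F y k hy
  have hN : 1 ≤ N := by
    have h1 := hdef 0 1 (by omega)
    have h2 := hyN (0+1) (by omega)
    omega
  have hPind : IndSeq G P N := by
    constructor
    · intro i j hij hj he
      have := hPd i j hij.le hj
      rw [he, SimpleGraph.dist_self] at this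
      omega
    · intro i j hij hj
      rw [← dist_eq_one_iff_adj, hPd i j hij.le hj]
      omega
  -- tails, with a window for the contacts with `P`
  have tail : ∀ i, 3 ≤ i → i + 3 ≤ k →
      ∃ (w : V) (T : Set V), w ∈ T ∧ r ∈ T ∧ (∀ v ∈ T, RIn G T v r) ∧
      (∀ v ∈ T, ∀ q ≤ N, G.Adj v (P q) → v = w) ∧
      (∀ v ∈ T, ∀ q ≤ N, v = P q → v = r ∧ v = w) ∧
      (∀ v ∈ T, G.dist r w = G.dist w v + G.dist r v) ∧
      (∃ q ≤ N, G.Adj w (P q)) ∧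
      (∀ q ≤ N, G.Adj w (P q) → y (i - 3) < q ∧ q < y (i + 3)) := by
    intro i hi1 hi2
    obtain ⟨w, T, h1, h2, h3, h4, h5, h6, h7, h8⟩ :=
      exists_tail hG r P N hN hPd (y i) (hyN i (by omega))
    refine ⟨w, T, h1, h2, h3, h4, h5, h6, h7, fun q hq ha => ?_⟩
    have h9 := h8 q hq ha
    have d1 := hdef i 3 hi2
    have d2 := hdef (i - 3) 3 (by omega)
    rw [show i - 3 + 3 = i by omega] at d2
    have n1 := hyN (i - 3) (by omega)
    have n2 := hyN (i + 3) (by omega)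
    change (y i ≤ q → F q + q ≤ F (y i) + y i + 2) ∧
        (q ≤ y i → F q + y i ≤ F (y i) + q + 2) at h9
    constructor
    · by_contra hcon
      have := hF2 q (y (i - 3)) (by omega) n1
      have := h9.2 (by omega)
      omega
    · by_contra hcon
      have := hF1 (y (i + 3)) q (by omega) hq
      have := h9.1 (by omega)
      omega
  obtain ⟨w1, T1, hw1, hr1, hc1, ha1, hp1, hg1, he1, hwin1⟩ := tail 3 le_rfl (by omega)
  obtain ⟨w2, T2, hw2, hr2, hc2, ha2, hp2, hg2, he2, hwin2⟩ :=
    tail (2 * t + 18) (by omega) (by omega)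
  obtain ⟨w3, T3, hw3, hr3, hc3, ha3, hp3, hg3, he3, hwin3⟩ :=
    tail (4 * t + 33) (by omega) (by omega)
  rw [show 2 * t + 18 - 3 = 2 * t + 15 by omega] at hwin2
  rw [show 4 * t + 33 - 3 = 4 * t + 30 by omega] at hwin3
  -- deficits between contacts
  have dgap : ∀ a b i d, a < y i → y (i + d) < b → i + d ≤ k → b ≤ N →
      a < b ∧ F a + a + d ≤ F b + b ∧ F b + a + d ≤ F a + b := by
    intro a b i d h1 h2 h3 h4
    have d1 := hdef i d h3
    have e1 := hF1 a (y i) h1.le (hyN i (by omega))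
    have e2 := hF2 a (y i) h1.le (hyN i (by omega))
    have e3 := hF1 (y (i+d)) b h2.le h4
    have e4 := hF2 (y (i+d)) b h2.le h4
    omega
  have gap12 : ∀ q1 ≤ N, ∀ q2 ≤ N, G.Adj w1 (P q1) → G.Adj w2 (P q2) →
      q1 < q2 ∧ F q1 + q1 + (2 * t + 9) ≤ F q2 + q2 ∧ F q2 + q1 + (2 * t + 9) ≤ F q1 + q2 := by
    intro q1 h1 q2 h2 a1 a2
    have b2 := (hwin2 q2 h2 a2).1
    rw [show 2 * t + 15 = (3 + 3) + (2 * t + 9) by omega] at b2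
    exact dgap q1 q2 _ _ (hwin1 q1 h1 a1).2 b2 (by omega) h2
  have gap23 : ∀ q2 ≤ N, ∀ q3 ≤ N, G.Adj w2 (P q2) → G.Adj w3 (P q3) →
      q2 < q3 ∧ F q2 + q2 + (2 * t + 9) ≤ F q3 + q3 ∧ F q3 + q2 + (2 * t + 9) ≤ F q2 + q3 := by
    intro q1 h1 q2 h2 a1 a2
    have b2 := (hwin3 q2 h2 a2).1
    rw [show 4 * t + 30 = (2 * t + 18 + 3) + (2 * t + 9) by omega] at b2
    exact dgap q1 q2 _ _ (hwin2 q1 h1 a1).2 b2 (by omega) h2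
  -- metric separation
  have sep : ∀ (w w' v : V) (q q' : ℕ), G.Adj w (P q) → G.Adj w' (P q') →
      G.dist r w = G.dist w v + G.dist r v → 
      F q' + G.dist (P q) (P q') ≤ F q + 2 * G.dist w' v + 4 := by
    intro w w' v q q' h1 h2 h3
    have e1 : G.dist w (P q) = 1 := dist_eq_one_iff_adj.2 h1
    have e2 : G.dist w' (P q') = 1 := dist_eq_one_iff_adj.2 h2
    have t1 := hG.dist_triangle (u := P q) (v := w) (w := P q')
    have t2 := hG.dist_triangle (u := w) (v := w') (w := P q')
    have t3 := hG.dist_triangle (u := w) (v := v) (w := w')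
    have t4 := hG.dist_triangle (u := r) (v := P q) (w := w)
    have t5 := hG.dist_triangle (u := r) (v := w') (w := P q')
    have t6 := hG.dist_triangle (u := r) (v := v) (w := w')
    rw [SimpleGraph.dist_comm (u := P q) (v := w)] at t1 t4
    rw [SimpleGraph.dist_comm (u := v) (v := w')] at t3 t6
    simp only [hF]
    omega
  obtain ⟨q1, hq1, hwq1⟩ := he1
  obtain ⟨q2, hq2, hwq2⟩ := he2
  obtain ⟨q3, hq3, hwq3⟩ := he3
  have far1 : ∀ v ∈ T1, t + 3 ≤ G.dist w2 v := by
    intro v hv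
    have h1 := sep w1 w2 v q1 q2 hwq1 hwq2 (hg1 v hv)
    have h2 := gap12 q1 hq1 q2 hq2 hwq1 hwq2
    have h3 := hPd q1 q2 h2.1.le hq2
    omega
  have far3 : ∀ v ∈ T3, t + 3 ≤ G.dist w2 v := by
    intro v hv
    have h1 := sep w3 w2 v q3 q2 hwq3 hwq2 (hg3 v hv)
    have h2 := gap23 q2 hq2 q3 hq3 hwq2 hwq3
    have h3 := hPd q2 q3 h2.1.le hq3
    rw [SimpleGraph.dist_comm] at h3
    omega
  have w2r : w2 ≠ r := by
    rintro rfl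
    have := far1 _ hr1
    simp at this
  have w1r : w1 ≠ r := by
    rintro rfl
    have h1 := sep w2 w1 w1 q2 q1 hwq2 hwq1 (hg2 _ hr2)
    have h2 := gap12 q1 hq1 q2 hq2 hwq1 hwq2
    have h3 := hPd q1 q2 h2.1.le hq2
    rw [SimpleGraph.dist_comm] at h3
    simp at h1
    omega
  have w3r : w3 ≠ r := by
    rintro rfl
    have h1 := sep w2 w3 w3 q2 q3 hwq2 hwq3 (hg2 _ hr2)
    have h2 := gap23 q2 hq2 q3 hq3 hwq2 hwq3
    have h3 := hPd q2 q3 h2.1.le hq3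
    simp at h1
    omega
  -- the union of the tails
  set Y : Set V := T1 ∪ T2 ∪ T3 with hY
  have hYP : ∀ v ∈ Y, ∀ q ≤ N, v ≠ P q := by
    rintro v ((hv | hv) | hv) q hq he
    · have := hp1 v hv q hq he
      exact w1r (this.2.symm.trans this.1)
    · have := hp2 v hv q hq he
      exact w2r (this.2.symm.trans this.1)
    · have := hp3 v hv q hq he
      exact w3r (this.2.symm.trans this.1)
  have hYA : ∀ v ∈ Y, ∀ q ≤ N, G.Adj v (P q) → v = w1 ∨ v = w2 ∨ v = w3 := by
    rintro v ((hv | hv) | hv) q hq he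
    · exact Or.inl (ha1 v hv q hq he)
    · exact Or.inr (Or.inl (ha2 v hv q hq he))
    · exact Or.inr (Or.inr (ha3 v hv q hq he))
  -- the upper path `R`
  obtain ⟨R, hRX, hRind⟩ : ∃ R : G.Walk w1 w3, (∀ v ∈ R.support, v ∈ T1 ∪ T3) ∧
      IndSeq G R.getVert R.length := by
    apply RIn.exists_ind
    exact ((hc1 w1 hw1).mono Set.subset_union_left).trans
      ((hc3 w3 hw3).mono Set.subset_union_right).symm
  have hRT : ∀ j, R.getVert j ∈ T1 ∪ T3 := fun j => hRX _ (R.getVert_mem_support j)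
  have hRY : ∀ j, R.getVert j ∈ Y := by
    intro j
    rcases hRT j with h | h
    · exact Or.inl (Or.inl h)
    · exact Or.inr h
  have hRfar : ∀ j, t + 3 ≤ G.dist w2 (R.getVert j) := by
    intro j
    rcases hRT j with h | h
    · exact far1 _ h
    · exact far3 _ h
  have hR0 : R.getVert 0 = w1 := R.getVert_zero
  have hRn : R.getVert R.length = w3 := R.getVert_length
  -- the connecting path `S`
  obtain ⟨S, hSX, hSind⟩ : ∃ S : G.Walk w2 w1, (∀ v ∈ S.support, v ∈ Y) ∧
      IndSeq G S.getVert S.length := by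
    apply RIn.exists_ind
    refine ((hc2 w2 hw2).mono ?_).trans ((hc1 w1 hw1).mono ?_).symm
    · exact fun v hv => Or.inl (Or.inr hv)
    · exact fun v hv => Or.inl (Or.inl hv)
  have hSY : ∀ j, S.getVert j ∈ Y := fun j => hSX _ (S.getVert_mem_support j)
  have hS0 : S.getVert 0 = w2 := S.getVert_zero
  have hSadj : ∀ j < S.length, G.Adj (S.getVert j) (S.getVert (j+1)) :=
    fun j hj => S.adj_getVert_succ hj
  have hSlen : 1 ≤ S.length := by
    by_contra hcon
    have h1 := S.getVert_length
    rw [show S.length = 0 by omega, hS0] at h1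
    have h2 := hRfar 0
    rw [hR0, ← h1] at h2
    simp at h2
  have hexm : ∃ m, m ≤ S.length ∧ ∃ j ≤ R.length, G.Adj (S.getVert m) (R.getVert j) := by
    refine ⟨S.length - 1, by omega, 0, by omega, ?_⟩
    have := hSadj (S.length - 1) (by omega)
    rw [show S.length - 1 + 1 = S.length by omega, S.getVert_length] at this
    rwa [hR0]
  obtain ⟨m, ⟨hmS, hmR⟩, hmmin⟩ : ∃ m, (m ≤ S.length ∧
      ∃ j ≤ R.length, G.Adj (S.getVert m) (R.getVert j)) ∧
      ∀ m', m' ≤ S.length → (∃ j ≤ R.length, G.Adj (S.getVert m') (R.getVert j)) → m ≤ m' :=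
    ⟨Nat.find hexm, Nat.find_spec hexm, fun m' h1 h2 => Nat.find_min' hexm ⟨h1, h2⟩⟩
  have hw2R : ∀ j, ¬ G.Adj w2 (R.getVert j) := by
    intro j h
    have h1 := hRfar j
    rw [dist_eq_one_iff_adj.2 h] at h1
    omega
  have hm1 : 1 ≤ m := by
    by_contra hcon
    obtain ⟨j, hj, h⟩ := hmR
    rw [show m = 0 by omega, hS0] at h
    exact hw2R j h
  have hSR : ∀ i ≤ m, ∀ j ≤ R.length, S.getVert i ≠ R.getVert j := by
    intro i hi j hj he
    rcases Nat.eq_zero_or_pos i with rfl | hi0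
    · have h2 := hRfar j
      rw [← he, hS0] at h2
      simp at h2
    · have h1 := hSadj (i - 1) (by omega)
      rw [show i - 1 + 1 = i by omega, he] at h1
      have := hmmin (i - 1) (by omega) ⟨j, hj, h1⟩
      omega
  -- top side
  obtain ⟨A', hA', htop⟩ := side_of (G := G) (c := R.getVert) (n := R.length) hRind
    (M := {v | ∃ i, 1 ≤ i ∧ i ≤ m ∧ v = S.getVert i}) (u := S.getVert m) (m := S.getVert 1)
    ⟨m, hm1, le_rfl, rfl⟩ ⟨1, le_rfl, hm1, rfl⟩
    (RIn.seq (G := G) (X := {v | ∃ i, 1 ≤ i ∧ i ≤ m ∧ v = S.getVert i}) S.getVert 1 m hm1 (fun i h1 h2 => ⟨i, h1, h2, rfl⟩)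
      (fun i h1 h2 => hSadj i (by omega))).symm
    (by
      rintro j hj ⟨i, h1, h2, h3⟩
      exact hSR i h2 j hj h3.symm)
    (by
      rintro v ⟨i, h1, h2, rfl⟩ j hj ha
      have := hmmin i (by omega) ⟨j, hj, ha⟩
      rw [show i = m by omega])
    hmR
  -- bottom path: last neighbour of `w1`, first neighbour of `w3`
  obtain ⟨α, ⟨hαN, hα⟩, hαmax⟩ : ∃ l, (l ≤ N ∧ G.Adj w1 (P l)) ∧
      ∀ q, q ≤ N → G.Adj w1 (P q) → q ≤ l :=
    ⟨Nat.findGreatest (fun q => G.Adj w1 (P q)) N, ⟨Nat.findGreatest_le N,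
      Nat.findGreatest_spec (P := fun q => G.Adj w1 (P q)) hq1 hwq1⟩,
      fun q h1 h2 => Nat.le_findGreatest h1 h2⟩
  have hexβ : ∃ l, l ≤ N ∧ G.Adj w3 (P l) := ⟨q3, hq3, hwq3⟩
  obtain ⟨β, ⟨hβN, hβ⟩, hβmin⟩ : ∃ l, (l ≤ N ∧ G.Adj w3 (P l)) ∧
      ∀ q, q ≤ N → G.Adj w3 (P q) → l ≤ q :=
    ⟨Nat.find hexβ, Nat.find_spec hexβ, fun q h1 h2 => Nat.find_min' hexβ ⟨h1, h2⟩⟩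
  have hα2 := (gap12 α hαN q2 hq2 hα hwq2).1
  have hβ2 := (gap23 q2 hq2 β hβN hwq2 hβ).1
  have hw2Y : w2 ∈ Y := Or.inl (Or.inr hw2)
  obtain ⟨A, hA, hbot⟩ := side_of (G := G) (c := fun i => P (α + i)) (n := β - α)
    (hPind.shift (by omega)) (M := {w2}) (u := w2) (m := w2) rfl rfl (RIn.refl rfl)
    (by
      intro i hi h
      exact hYP w2 hw2Y (α + i) (by omega) (Eq.symm h))
    (by
      rintro v rfl i hi ha
      rfl)
    ⟨q2 - α, by omega, by rwa [show α + (q2 - α) = q2 by omega]⟩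
  simp only [add_zero, show α + (β - α) = β by omega] at hbot
  rw [hR0, hRn] at htop
  have hS2 : ∀ b, 1 ≤ b → b ≤ S.length → w2 ≠ S.getVert b := fun b h1 h2 h =>
    absurd (hS0.trans h) (hSind.1 0 b (by omega) h2)
  have hS3 : ∀ b, 1 ≤ b → b ≤ S.length → G.Adj w2 (S.getVert b) → b = 1 := by
    intro b h1 h2 h
    have h' : G.Adj (S.getVert 0) (S.getVert b) := by
      rw [hS0]
      exact h
    have := (hSind.2 0 b (by omega) h2).1 h'
    omega
  have hlink : Linked G ![P α, w2, P β] ![w1, S.getVert 1, w3] A A' := by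
    constructor
    · intro i
      fin_cases i
      · exact hα.symm
      · have := hSadj 0 (by omega)
        rwa [hS0] at this
      · exact hβ.symm
    · intro i j v hv w hw
      rcases hA i v hv with rfl | ⟨a, ha, rfl⟩
      · rcases hA' j w hw with ⟨b, hb1, hb2, rfl⟩ | ⟨b, hb, rfl⟩
        · constructor
          · exact hS2 b hb1 (by omega)
          · intro h
            have := hS3 b hb1 (by omega) h
            refine ⟨1, rfl, ?_⟩
            rw [this]
            rfl
        · constructor
          · intro h
            have h2 := hRfar b
            rw [← h] at h2
            simp at h2
          · intro h
            exact absurd h (hw2R b)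
      · have hwY : w ∈ Y ∧ w ≠ w2 := by
          rcases hA' j w hw with ⟨b, hb1, hb2, rfl⟩ | ⟨b, hb, rfl⟩
          · exact ⟨hSY b, (hS2 b hb1 (by omega)).symm⟩
          · refine ⟨hRY b, ?_⟩
            intro h
            have h2 := hRfar b
            rw [h] at h2
            simp at h2
        refine ⟨(hYP w hwY.1 (α + a) (by omega)).symm, fun h => ?_⟩
        rcases hYA w hwY.1 (α + a) (by omega) h.symm with rfl | rfl | rfl
        · have := hαmax (α + a) (by omega) h.symm
          refine ⟨0, ?_, rfl⟩
          rw [show α + a = α by omega]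
          rfl
        · exact absurd rfl hwY.2
        · have := hβmin (α + a) (by omega) h.symm
          refine ⟨2, ?_, rfl⟩
          rw [show α + a = β by omega]
          rfl
  -- lengths
  have hlen : ∀ o o', (o = w2 ∨ (G.Adj w2 o ∧ ∃ k ≤ β - α, o = P (α + k))) →
      (o' = S.getVert m ∨ (G.Adj (S.getVert m) o' ∧ ∃ k ≤ R.length, o' = R.getVert k)) →
      t + 1 ≤ G.dist o o' := by
    intro o o' ho ho'
    have h1 : G.dist w2 o ≤ 1 := by
      rcases ho with rfl | ⟨h, -⟩
      · simp
      · exact (dist_eq_one_iff_adj.2 h).le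
    have h2 : ∃ j, G.dist o' (R.getVert j) ≤ 1 := by
      rcases ho' with rfl | ⟨-, j, -, rfl⟩
      · obtain ⟨j, -, h⟩ := hmR
        exact ⟨j, (dist_eq_one_iff_adj.2 h).le⟩
      · exact ⟨j, by simp⟩
    obtain ⟨j, h2⟩ := h2
    have h3 := hRfar j
    have h4 := hG.dist_triangle (u := w2) (v := o) (w := R.getVert j)
    have h5 := hG.dist_triangle (u := o) (v := o') (w := R.getVert j)
    omega
  rcases hbot with ⟨o, ho, hon⟩ | ⟨o, ho, hon⟩ <;> rcases htop with ⟨o', ho', hon'⟩ | ⟨o', ho', hon'⟩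
  · exact Or.inl (theta_of ho ho' hlink (hlen _ _ hon hon'))
  · refine Or.inr (Or.inl (pyramid_of ho' ho hlink.symm fun i => ?_))
    rw [SimpleGraph.dist_comm]
    exact hlen _ _ hon (hon' i)
  · exact Or.inr (Or.inl (pyramid_of ho ho' hlink fun i => hlen _ _ (hon i) hon'))
  · exact Or.inr (Or.inr (prism_of ho ho' hlink fun i => hlen _ _ (hon i) (hon' i)))

/-- Every (`t`-theta, `t`-pyramid, `t`-prism)-free connected graph
has isometric path complexity at most `8t + 63`: there is a vertex `r` such that
every isometric path can be covered by `8t + 63` many `r`-rooted isometric paths.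
(In particular, for `t = 1`, every (theta, pyramid, prism)-free graph has
isometric path complexity at most `71`.) -/
theorem statement8 [Fintype V] [Nonempty V] (G : SimpleGraph V) (hG : G.Connected)
    (t : ℕ) (ht : 1 ≤ t)
    (h1 : ¬ HasTTheta G t) (h2 : ¬ HasTPyramid G t) (h3 : ¬ HasTPrism G t) :
    ∃ r : V, ∀ (x y : V) (p : G.Walk x y), IsIsometricPath G p →
      CoveredBy G r p (8 * t + 63) := by
  classical
  obtain ⟨r⟩ := ‹Nonempty V›
  refine ⟨r, fun x y p hp => ?_⟩
  have hPd : ∀ i j, i ≤ j → j ≤ p.length → G.dist (p.getVert i) (p.getVert j) = j - i :=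
    fun i j h1 h2 => geo_dist hG p hp.2 h1 h2
  have hF1 : ∀ a b, a ≤ b → b ≤ p.length →
      G.dist r (p.getVert a) + a ≤ G.dist r (p.getVert b) + b := by
    intro a b hab hb
    have h1 := hPd a b hab hb
    have h2 := hG.dist_triangle (u := r) (v := p.getVert b) (w := p.getVert a)
    rw [SimpleGraph.dist_comm (u := p.getVert b)] at h2
    omega
  have hF2 : ∀ a b, a ≤ b → b ≤ p.length →
      G.dist r (p.getVert b) + a ≤ G.dist r (p.getVert a) + b := by
    intro a b hab hb
    have h1 := hPd a b hab hb
    have h2 := hG.dist_triangle (u := r) (v := p.getVert a) (w := p.getVert b)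
    omega
  rcases greedy (fun q => G.dist r (p.getVert q)) p.length hF1 hF2 (8 * t + 63) 0 (Nat.zero_le _)
    with ⟨I, hc, hI, hcov⟩ | ⟨z, -, hzN, hz⟩
  · have hch : ∀ z : ℕ × ℕ, ∃ q : Σ v : V, G.Walk r v, z ∈ I → (IsIsometricPath G q.2 ∧
        ∀ k, z.1 ≤ k → k ≤ z.2 → p.getVert k ∈ q.2.support) := by
      intro z
      by_cases hz : z ∈ I
      · obtain ⟨h4, h5, h6⟩ := hI z hz
        obtain ⟨q, hq⟩ := cover_interval hG r p z.1 z.2 h4 h5 h6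
        exact ⟨q, fun _ => hq⟩
      · exact ⟨⟨r, Walk.nil⟩, fun h => absurd h hz⟩
    choose Q hQ using hch
    refine ⟨I.image Q, Finset.card_image_le.trans hc, ?_, ?_⟩
    · intro q hq
      obtain ⟨z, hz, rfl⟩ := Finset.mem_image.1 hq
      exact (hQ z hz).1
    · intro a ha
      rw [Walk.mem_support_iff_exists_getVert] at ha
      obtain ⟨n, rfl, hn⟩ := ha
      obtain ⟨z, hz, h4, h5⟩ := hcov n (Nat.zero_le _) hn
      exact ⟨Q z, Finset.mem_image_of_mem _ hz, (hQ z hz).2 n h4 h5⟩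
  · exfalso
    rcases three_of hG r t p.getVert p.length hPd z (8 * t + 63) (by omega) hzN hz with h | h | h
    · exact h1 h
    · exact h2 h
    · exact h3 h
end

section
/- Let G be a graph obtained from a (theta, prism, pyramid)-free graph by the following operation: contract all edges of G both of whose endpoints lie in some triangle. If G is an outerstring graph containing an induced 4-theta, 4-prism, or 4-pyramid, the contraction yields a 3-theta that is an outerstring graph; adding an apex vertex joined by paths of length ≥ 2 to all vertices yields a string graph containing a full subdivision of K_{3,3} as an induced subgraph — a contradiction. Hence every outerstring graph is (4-theta, 4-prism, 4-pyramid)-free. -/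
open SimpleGraph

variable {V : Type*}

/-- `G` is an outerstring graph: the intersection graph of a collection of
simple (injective) curves in the closed upper half-plane, each having one
endpoint on the boundary line. -/
def IsOuterstringGraph (G : SimpleGraph V) : Prop :=
  ∃ f : V → unitInterval → ℝ × ℝ,
    (∀ v, Continuous (f v)) ∧
    (∀ v, Function.Injective (f v)) ∧
    (∀ v t, 0 ≤ (f v t).2) ∧
    (∀ v, (f v 0).2 = 0) ∧
    (∀ u v, u ≠ v → (G.Adj u v ↔ ∃ s t, f u s = f v t))


open Complex in
lemma os_exp_const (D : unitInterval → ℂ) (hD : Continuous D) (c : ℂ)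
    (h : ∀ t, exp (D t) = c) : D 1 = D 0 := by
  have hn : ∀ t, ∃ n : ℤ, D t = D 0 + n * (2 * Real.pi * I) := fun t =>
    Complex.exp_eq_exp_iff_exists_int.1 ((h t).trans (h 0).symm)
  choose n hn using hn
  have hc : Continuous (fun t => ((n t : ℤ) : ℝ)) := by
    have : (fun t => ((n t : ℤ) : ℝ)) = fun t => ((D t - D 0) / (2 * Real.pi * I)).re := by
      funext t
      rw [hn t, add_sub_cancel_left, mul_div_assoc, div_self Complex.two_pi_I_ne_zero]
      simp
    rw [this]
    fun_prop
  have hn' : Continuous n := Int.isClosedEmbedding_coe_real.isInducing.continuous_iff.2 hc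
  have h10 : n 1 = n 0 := PreconnectedSpace.constant inferInstance hn'
  rw [hn 1, h10, ← hn 0]

open Complex in
/-- branch of log along a curve in a rotated half plane -/
lemma os_edge (L F : unitInterval → ℂ) (hL : Continuous L) (hF : Continuous F)
    (hLF : ∀ t, exp (L t) = F t) (w : ℂ) (hw : w ≠ 0) (hs : ∀ t, w * F t ∈ slitPlane) :
    (L 1).im - (L 0).im = (log (w * F 1)).im - (log (w * F 0)).im := by
  have hD : Continuous fun t => L t - log (w * F t) :=
    hL.sub ((continuous_const.mul hF).clog hs)
  have := os_exp_const _ hD w⁻¹ (fun t => by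
    have h0 : w * F t ≠ 0 := slitPlane_ne_zero (hs t)
    have : F t ≠ 0 := right_ne_zero_of_mul h0
    rw [exp_sub, hLF, exp_log h0]
    field_simp)
  have := congrArg Complex.im this
  simp at this ⊢
  linarith

open Complex in
lemma os_slit (w z : ℂ) (h : 0 ≤ (w * z).re) (hw : w ≠ 0) (hz : z ≠ 0) : w * z ∈ slitPlane := by
  rw [mem_slitPlane_iff]
  rcases h.lt_or_eq with h | h
  · exact Or.inl h
  · right
    intro h2
    exact mul_ne_zero hw hz (Complex.ext h.symm h2)

open Complex in
lemma os_logI (r : ℝ) (hr : 0 < r) : (log (I * r)).im = Real.pi / 2 := by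
  rw [log_im, mul_comm, arg_real_mul _ hr, arg_I]

open Complex in
lemma os_lognegI (r : ℝ) (hr : 0 < r) : (log (-I * r)).im = -(Real.pi / 2) := by
  rw [log_im, mul_comm, arg_real_mul _ hr, arg_neg_I]

open Complex in
lemma os_cross_complex (g d : unitInterval → ℂ) (hg : Continuous g) (hd : Continuous d)
    (hgi : ∀ s, 0 ≤ (g s).im) (hdi : ∀ s, 0 ≤ (d s).im)
    (x1 x2 x3 x4 : ℝ) (h12 : x1 < x2) (h23 : x2 < x3) (h34 : x3 < x4)
    (g0 : g 0 = x1) (g1 : g 1 = x3) (d0 : d 0 = x2) (d1 : d 1 = x4) :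
    ∃ s t, g s = d t := by
  by_contra! hne
  let F : C(unitInterval × unitInterval, ℂ) := ⟨fun p => g p.1 - d p.2, by fun_prop⟩
  have hF0 : ∀ p, F p ≠ 0 := fun p => sub_ne_zero.2 (hne _ _)
  -- lift the extension of `F` to the whole plane through `exp`
  let pr : ℝ → unitInterval := Set.projIcc 0 1 zero_le_one
  have hpr : Continuous pr := continuous_projIcc
  let F' : C(ℝ × ℝ, ℂ) := ⟨fun p => F (pr p.1, pr p.2), by fun_prop⟩
  obtain ⟨L', hL', -⟩ := isCoveringMapOn_exp.existsUnique_continuousMap_lifts F' (a₀ := (0,0))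
    (e₀ := log (F' (0,0))) (by exact exp_log (hF0 _)) (by exact fun p => hF0 _)
  let L : unitInterval × unitInterval → ℂ := fun p => L' (p.1, p.2)
  have hLc : Continuous L := by fun_prop
  have hLF : ∀ s t, exp (L (s,t)) = g s - d t := fun s t => by
    have := congrFun hL'.2 ((s:ℝ),(t:ℝ))
    simpa [F', F, pr, L] using this
  have hs0 : ∀ s t, g s - d t ≠ 0 := fun s t => hF0 (s,t)
  have nI : (-I) ≠ 0 := neg_ne_zero.2 I_ne_zero
  -- four edges
  have e1 := os_edge (fun s => L (s,0)) (fun s => g s - d 0) (by fun_prop) (by fun_prop)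
    (fun s => hLF s 0) (-I) nI
    (fun s => os_slit _ _ (by simp [d0, hgi s]) nI (hs0 s 0))
  have e2 := os_edge (fun s => L (s,1)) (fun s => g s - d 1) (by fun_prop) (by fun_prop)
    (fun s => hLF s 1) (-I) nI
    (fun s => os_slit _ _ (by simp [d1, hgi s]) nI (hs0 s 1))
  have e3 := os_edge (fun t => L (0,t)) (fun t => g 0 - d t) (by fun_prop) (by fun_prop)
    (fun t => hLF 0 t) I I_ne_zero
    (fun t => os_slit _ _ (by simp [g0, hdi t]) I_ne_zero (hs0 0 t))
  have e4 := os_edge (fun t => L (1,t)) (fun t => g 1 - d t) (by fun_prop) (by fun_prop)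
    (fun t => hLF 1 t) I I_ne_zero
    (fun t => os_slit _ _ (by simp [g1, hdi t]) I_ne_zero (hs0 1 t))
  simp only [g0, g1, d0, d1] at e1 e2 e3 e4
  have c1 : -I * ((x1:ℂ) - x2) = I * ((x2 - x1 : ℝ) : ℂ) := by push_cast; ring
  have c2 : -I * ((x3:ℂ) - x2) = -I * ((x3 - x2 : ℝ) : ℂ) := by push_cast; ring
  have c3 : -I * ((x1:ℂ) - x4) = I * ((x4 - x1 : ℝ) : ℂ) := by push_cast; ring
  have c4 : -I * ((x3:ℂ) - x4) = I * ((x4 - x3 : ℝ) : ℂ) := by push_cast; ring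
  have c5 : I * ((x1:ℂ) - x2) = -I * ((x2 - x1 : ℝ) : ℂ) := by push_cast; ring
  have c6 : I * ((x1:ℂ) - x4) = -I * ((x4 - x1 : ℝ) : ℂ) := by push_cast; ring
  have c7 : I * ((x3:ℂ) - x2) = I * ((x3 - x2 : ℝ) : ℂ) := by push_cast; ring
  have c8 : I * ((x3:ℂ) - x4) = -I * ((x4 - x3 : ℝ) : ℂ) := by push_cast; ring
  rw [c1, c2, os_logI _ (by linarith), os_lognegI _ (by linarith)] at e1
  rw [c3, c4, os_logI _ (by linarith), os_logI _ (by linarith)] at e2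
  rw [c5, c6, os_lognegI _ (by linarith), os_lognegI _ (by linarith)] at e3
  rw [c7, c8, os_logI _ (by linarith), os_lognegI _ (by linarith)] at e4
  have := Real.pi_pos
  linarith

/-- crossing lemma in the closed half-plane -/
lemma os_cross {X Y : Set (ℝ × ℝ)} (hX : ∀ z ∈ X, 0 ≤ z.2) (hY : ∀ z ∈ Y, 0 ≤ z.2)
    {x1 x2 x3 x4 : ℝ × ℝ} (h12 : x1.1 < x2.1) (h23 : x2.1 < x3.1) (h34 : x3.1 < x4.1)
    (z1 : x1.2 = 0) (z2 : x2.2 = 0) (z3 : x3.2 = 0) (z4 : x4.2 = 0)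
    (jX : JoinedIn X x1 x3) (jY : JoinedIn Y x2 x4) : ∃ z, z ∈ X ∧ z ∈ Y := by
  obtain ⟨g, hg⟩ := jX
  obtain ⟨d, hd⟩ := jY
  obtain ⟨s, t, h⟩ := os_cross_complex (fun s => Complex.equivRealProdCLM.symm (g s))
    (fun s => Complex.equivRealProdCLM.symm (d s)) (by fun_prop) (by fun_prop)
    (fun s => by simpa using hX _ (hg s)) (fun s => by simpa using hY _ (hd s))
    x1.1 x2.1 x3.1 x4.1 h12 h23 h34
    (by apply Complex.ext <;> simp [z1])
    (by apply Complex.ext <;> simp [z3])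
    (by apply Complex.ext <;> simp [z2])
    (by apply Complex.ext <;> simp [z4])
  have h' : g s = d t := Complex.equivRealProdCLM.symm.injective h
  exact ⟨g s, hg s, h' ▸ hd t⟩

section OSComb
variable {W : Type*} {G : SimpleGraph W}

lemma os_joined_walk (f : W → unitInterval → ℝ × ℝ)
    (hc : ∀ v, Continuous (f v)) (hadj : ∀ u v, G.Adj u v → ∃ s t, f u s = f v t)
    {u w : W} (p : G.Walk u w) :
    JoinedIn {z | ∃ v ∈ p.support, ∃ s, f v s = z} (f u 0) (f w 0) := by
  have single : ∀ v s t, JoinedIn {z | ∃ s, f v s = z} (f v s) (f v t) := by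
    intro v s t
    haveI : PathConnectedSpace unitInterval :=
      isPathConnected_iff_pathConnectedSpace.1
        ((convex_Icc (0:ℝ) 1).isPathConnected ⟨0, by simp⟩)
    have : IsPathConnected (Set.range (f v)) := isPathConnected_range (hc v)
    exact this.joinedIn _ ⟨s, rfl⟩ _ ⟨t, rfl⟩
  induction p with
  | nil => exact (single _ 0 0).mono (by rintro z ⟨s, hs⟩; exact ⟨_, by simp, s, hs⟩)
  | @cons u v w h p ih =>
    obtain ⟨s, t, hst⟩ := hadj _ _ h
    have h1 := (single u 0 s).mono (V := {z | ∃ x ∈ (SimpleGraph.Walk.cons h p).support, ∃ s, f x s = z})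
      (by rintro z ⟨s, hs⟩; exact ⟨_, by simp, s, hs⟩)
    have h2 := (single v t 0).mono (V := {z | ∃ x ∈ (SimpleGraph.Walk.cons h p).support, ∃ s, f x s = z})
      (by rintro z ⟨s, hs⟩; exact ⟨v, by simp, s, hs⟩)
    rw [hst] at h1
    refine (h1.trans h2).trans (ih.mono ?_)
    rintro z ⟨x, hx, s, hs⟩
    exact ⟨x, by simp [hx], s, hs⟩

/-- Order-theoretic pigeonhole core. -/
lemma os_order (a b : ℝ) (m : Fin 3 → ℝ) (hab : a ≠ b) (ham : ∀ i, a ≠ m i) (hbm : ∀ i, b ≠ m i)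
    (hm : ∀ i j, i ≠ j → m i ≠ m j)
    (C : ℝ → ℝ → ℝ → ℝ → Prop)
    (hC : ∀ x y z w, x < y → y < z → z < w →
      (¬ C x z y w ∧ ¬ C z x y w ∧ ¬ C x z w y ∧ ¬ C z x w y ∧
        ¬ C y w x z ∧ ¬ C y w z x ∧ ¬ C w y x z ∧ ¬ C w y z x))
    (hall : ∀ i j, i ≠ j → C a (m i) (m j) b) : False := by
  have key : ∀ i j, i ≠ j →
      ¬ ((min a b < m i ∧ m i < max a b) ↔ (min a b < m j ∧ m j < max a b)) := by
    intro i j hij hiff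
    have c1 := hall i j hij
    have c2 := hall j i hij.symm
    have h1 := ham i
    have h2 := ham j
    have h3 := hbm i
    have h4 := hbm j
    have h5 := hm i j hij
    generalize m i = p at *
    generalize m j = q at *
    clear hall ham hbm hm
    have hh : ∀ x y z w, x < y → y < z → z < w →
      (¬ C x z y w ∧ ¬ C z x y w ∧ ¬ C x z w y ∧ ¬ C z x w y ∧
        ¬ C y w x z ∧ ¬ C y w z x ∧ ¬ C w y x z ∧ ¬ C w y z x) := hC
    rcases lt_or_gt_of_ne hab with h | h <;>
    rcases lt_or_gt_of_ne h1 with h1 | h1 <;>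
    rcases lt_or_gt_of_ne h2 with h2 | h2 <;>
    rcases lt_or_gt_of_ne h3 with h3 | h3 <;>
    rcases lt_or_gt_of_ne h4 with h4 | h4 <;>
    rcases lt_or_gt_of_ne h5 with h5 | h5 <;>
    simp only [min_eq_left h.le, max_eq_right h.le, min_eq_right h.le, max_eq_left h.le,
      h1, h2, h3, h4, h1.not_gt, h2.not_gt, h3.not_gt, h4.not_gt, and_true, and_false, iff_true,
      iff_false, not_true] at hiff <;>
    first
    | linarith
    | (clear hiff; grind)
  have k1 := key 0 1 (by decide)
  have k2 := key 0 2 (by decide)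
  have k3 := key 1 2 (by decide)
  tauto

lemma os_core (h : IsOuterstringGraph G) (a b : W) (m : Fin 3 → W)
    (P : ∀ i, G.Walk a (m i)) (Q : ∀ i, G.Walk (m i) b)
    (hPQ : ∀ i j, i ≠ j → ∀ x ∈ (P i).support, ∀ y ∈ (Q j).support, x ≠ y ∧ ¬ G.Adj x y) :
    False := by
  obtain ⟨f, hc, -, hpos, hz, hadj⟩ := h
  have hadj' : ∀ u v, G.Adj u v → ∃ s t, f u s = f v t := fun u v h => (hadj u v h.ne).1 h
  have hdis : ∀ i j, i ≠ j → ∀ x ∈ (P i).support, ∀ y ∈ (Q j).support, ∀ s t, f x s ≠ f y t := by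
    intro i j hij x hx y hy s t he
    obtain ⟨h1, h2⟩ := hPQ i j hij x hx y hy
    exact h2 ((hadj x y h1).2 ⟨s, t, he⟩)
  let SP : Fin 3 → Set (ℝ × ℝ) := fun i => {z | ∃ v ∈ (P i).support, ∃ s, f v s = z}
  let SQ : Fin 3 → Set (ℝ × ℝ) := fun i => {z | ∃ v ∈ (Q i).support, ∃ s, f v s = z}
  have jP : ∀ i, JoinedIn (SP i) (f a 0) (f (m i) 0) := fun i => os_joined_walk f hc hadj' (P i)
  have jQ : ∀ i, JoinedIn (SQ i) (f (m i) 0) (f b 0) := fun i => os_joined_walk f hc hadj' (Q i)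
  have hSP : ∀ i, ∀ z ∈ SP i, 0 ≤ z.2 := by
    rintro i z ⟨v, -, s, rfl⟩; exact hpos v s
  have hSQ : ∀ i, ∀ z ∈ SQ i, 0 ≤ z.2 := by
    rintro i z ⟨v, -, s, rfl⟩; exact hpos v s
  have hSS : ∀ i j, i ≠ j → ∀ z, z ∈ SP i → z ∈ SQ j → False := by
    rintro i j hij z ⟨x, hx, s, rfl⟩ ⟨y, hy, t, h⟩
    exact hdis i j hij x hx y hy s t h.symm
  have hne : ∀ i j, i ≠ j → ∀ x ∈ (P i).support, ∀ y ∈ (Q j).support, (f x 0).1 ≠ (f y 0).1 := by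
    intro i j hij x hx y hy he
    exact hdis i j hij x hx y hy 0 0 (Prod.ext he ((hz x).trans (hz y).symm))
  have nxt : ∀ i : Fin 3, ∃ j, j ≠ i := by decide
  refine os_order (f a 0).1 (f b 0).1 (fun i => (f (m i) 0).1)
    (hne 0 1 (by decide) _ (by simp) _ (by simp))
    (fun i => by
      obtain ⟨j, hj⟩ := nxt i
      exact hne j i hj _ (by simp) _ (by simp))
    (fun i => by
      obtain ⟨j, hj⟩ := nxt i
      exact (hne i j hj.symm _ (by simp) _ (by simp)).symm)
    (fun i j hij => hne i j hij _ (by simp) _ (by simp))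
    (fun p q r s => ∃ X Y : Set (ℝ × ℝ), (∀ z ∈ X, 0 ≤ z.2) ∧ (∀ z ∈ Y, 0 ≤ z.2) ∧
      (∀ z, z ∈ X → z ∈ Y → False) ∧ JoinedIn X (p, 0) (q, 0) ∧ JoinedIn Y (r, 0) (s, 0)) ?_ ?_
  · intro x y z w hxy hyz hzw
    refine ⟨?_, ?_, ?_, ?_, ?_, ?_, ?_, ?_⟩
    all_goals
      rintro ⟨X, Y, hX, hY, hd, j1, j2⟩
    · obtain ⟨q, h1, h2⟩ := os_cross hX hY (x1 := (x,0)) (x2 := (y,0)) (x3 := (z,0)) (x4 := (w,0)) hxy hyz hzw rfl rfl rfl rfl j1 j2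
      exact hd q h1 h2
    · obtain ⟨q, h1, h2⟩ := os_cross hX hY (x1 := (x,0)) (x2 := (y,0)) (x3 := (z,0)) (x4 := (w,0)) hxy hyz hzw rfl rfl rfl rfl j1.symm j2
      exact hd q h1 h2
    · obtain ⟨q, h1, h2⟩ := os_cross hX hY (x1 := (x,0)) (x2 := (y,0)) (x3 := (z,0)) (x4 := (w,0)) hxy hyz hzw rfl rfl rfl rfl j1 j2.symm
      exact hd q h1 h2
    · obtain ⟨q, h1, h2⟩ := os_cross hX hY (x1 := (x,0)) (x2 := (y,0)) (x3 := (z,0)) (x4 := (w,0)) hxy hyz hzw rfl rfl rfl rfl j1.symm j2.symm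
      exact hd q h1 h2
    · obtain ⟨q, h1, h2⟩ := os_cross hY hX (x1 := (x,0)) (x2 := (y,0)) (x3 := (z,0)) (x4 := (w,0)) hxy hyz hzw rfl rfl rfl rfl j2 j1
      exact hd q h2 h1
    · obtain ⟨q, h1, h2⟩ := os_cross hY hX (x1 := (x,0)) (x2 := (y,0)) (x3 := (z,0)) (x4 := (w,0)) hxy hyz hzw rfl rfl rfl rfl j2.symm j1
      exact hd q h2 h1
    · obtain ⟨q, h1, h2⟩ := os_cross hY hX (x1 := (x,0)) (x2 := (y,0)) (x3 := (z,0)) (x4 := (w,0)) hxy hyz hzw rfl rfl rfl rfl j2 j1.symm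
      exact hd q h2 h1
    · obtain ⟨q, h1, h2⟩ := os_cross hY hX (x1 := (x,0)) (x2 := (y,0)) (x3 := (z,0)) (x4 := (w,0)) hxy hyz hzw rfl rfl rfl rfl j2.symm j1.symm
      exact hd q h2 h1
  · intro i j hij
    have e : ∀ v, ((f v 0).1, (0:ℝ)) = f v 0 := fun v => Prod.ext rfl (hz v).symm
    refine ⟨SP i, SQ j, hSP i, hSQ j, hSS i j hij, ?_, ?_⟩
    · rw [e, e]; exact jP i
    · rw [e, e]; exact jQ j

/-- Common generalisation of thetas, prisms and pyramids. -/
lemma os_general (h : IsOuterstringGraph G) (a b : Fin 3 → W) (p : ∀ i, G.Walk (a i) (b i))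
    (hp : ∀ i, (p i).IsPath) (hl : ∀ i, 4 ≤ (p i).length)
    (hdis : ∀ i j, i ≠ j → ∀ x, x ∈ (p i).support → x ∈ (p j).support →
      (x = a i ∧ x = a j) ∨ (x = b i ∧ x = b j))
    (ha : ∀ i j, a i = a j ∨ G.Adj (a i) (a j)) (hb : ∀ i j, b i = b j ∨ G.Adj (b i) (b j))
    (hadj : ∀ i j x y, x ∈ (p i).support → y ∈ (p j).support → G.Adj x y →
      (∃ k, s(x, y) ∈ (p k).edges) ∨ (∃ k l, x = a k ∧ y = a l) ∨ (∃ k l, x = b k ∧ y = b l)) :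
    False := by
  have inj : ∀ i k l, k ≤ (p i).length → l ≤ (p i).length →
      (p i).getVert k = (p i).getVert l → k = l := fun i k l hk hl h =>
    (hp i).getVert_injOn hk hl h
  have wa : ∀ i j, ∃ q : G.Walk (a i) (a j), ∀ x ∈ q.support, ∃ c, x = a c := by
    intro i j
    rcases ha i j with e | e
    · exact ⟨(SimpleGraph.Walk.nil : G.Walk (a i) (a i)).copy rfl e, by simp⟩
    · exact ⟨e.toWalk, by simp⟩
  have wb : ∀ i j, ∃ q : G.Walk (b i) (b j), ∀ x ∈ q.support, ∃ c, x = b c := by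
    intro i j
    rcases hb i j with e | e
    · exact ⟨(SimpleGraph.Walk.nil : G.Walk (b i) (b i)).copy rfl e, by simp⟩
    · exact ⟨e.toWalk, by simp⟩
  choose qa hqa using wa
  choose qb hqb using wb
  have g0 : ∀ i, (p i).getVert 0 = a i := fun i => (p i).getVert_zero
  have gl : ∀ i, (p i).getVert (p i).length = b i := fun i => (p i).getVert_length
  refine os_core h (a 0) (b 0) (fun i => (p i).getVert 2)
    (fun i => (qa 0 i).append ((p i).take 2)) (fun i => ((p i).drop 2).append (qb i 0)) ?_
  intro i j hij x hx y hy
  have lo : ∃ c k, k ≤ 2 ∧ x = (p c).getVert k ∧ (c = i ∨ k = 0) := by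
    rcases (SimpleGraph.Walk.mem_support_append_iff _ _).1 hx with hx | hx
    · obtain ⟨c, hc⟩ := hqa _ _ x hx
      exact ⟨c, 0, by simp, by rw [hc, g0], Or.inr rfl⟩
    · obtain ⟨k, hk, hk2⟩ := SimpleGraph.Walk.mem_support_iff_exists_getVert.1 hx
      rw [SimpleGraph.Walk.take_getVert] at hk
      exact ⟨i, 2 ⊓ k, by simp, hk.symm, Or.inl rfl⟩
  have hi : ∃ c k, 2 ≤ k ∧ k ≤ (p c).length ∧ y = (p c).getVert k ∧ (c = j ∨ k = (p c).length) := by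
    rcases (SimpleGraph.Walk.mem_support_append_iff _ _).1 hy with hy | hy
    · obtain ⟨k, hk, hk2⟩ := SimpleGraph.Walk.mem_support_iff_exists_getVert.1 hy
      rw [SimpleGraph.Walk.drop_getVert] at hk
      rw [SimpleGraph.Walk.drop_length] at hk2
      have := hl j
      exact ⟨j, 2 + k, by omega, by omega, hk.symm, Or.inl rfl⟩
    · obtain ⟨c, hc⟩ := hqb _ _ y hy
      have := hl c
      exact ⟨c, (p c).length, by omega, le_rfl, by rw [hc, gl], Or.inr rfl⟩
  obtain ⟨c, k, hk, hxc, hck⟩ := lo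
  obtain ⟨d, l, hl2, hll, hyd, hdl⟩ := hi
  have xs : x ∈ (p c).support := hxc ▸ SimpleGraph.Walk.getVert_mem_support _ _
  have ys : y ∈ (p d).support := hyd ▸ SimpleGraph.Walk.getVert_mem_support _ _
  have lo' : ∀ c' k', k' ≤ (p c').length → x = (p c').getVert k' → k' ≤ 2 ∧ (c' = i ∨ k' = 0) := by
    intro c' k' hk' hx'
    by_cases hcc : c' = c
    · subst hcc
      have := inj c' k k' (by have := hl c'; omega) hk' (hxc.symm.trans hx')
      subst this
      exact ⟨hk, hck⟩
    · rcases hdis c' c hcc x (hx' ▸ SimpleGraph.Walk.getVert_mem_support _ _) xs with ⟨h1, h2⟩ | ⟨h1, h2⟩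
      · have := inj c' k' 0 hk' (by simp) (by rw [← hx', g0, h1])
        subst this
        simp
      · have := inj c k (p c).length (by have := hl c; omega) le_rfl (by rw [← hxc, gl, h2])
        have := hl c
        omega
  have hi' : ∀ c' k', k' ≤ (p c').length → y = (p c').getVert k' →
      2 ≤ k' ∧ (c' = j ∨ k' = (p c').length) := by
    intro c' k' hk' hx'
    by_cases hcc : c' = d
    · subst hcc
      have := inj c' l k' hll hk' (hyd.symm.trans hx')
      subst this
      exact ⟨hl2, hdl⟩
    · rcases hdis c' d hcc y (hx' ▸ SimpleGraph.Walk.getVert_mem_support _ _) ys with ⟨h1, h2⟩ | ⟨h1, h2⟩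
      · have := inj d l 0 hll (by simp) (by rw [← hyd, g0, h2])
        omega
      · have := inj c' k' (p c').length hk' le_rfl (by rw [← hx', gl, h1])
        have := hl c'
        exact ⟨by omega, Or.inr (by omega)⟩
  have both : ∀ e k' l', k' ≤ (p e).length → l' ≤ (p e).length → x = (p e).getVert k' →
      y = (p e).getVert l' → k' + 2 ≤ l' := by
    intro e k' l' hk' hl' hx' hy'
    obtain ⟨u1, u2⟩ := lo' e k' hk' hx'
    obtain ⟨v1, v2⟩ := hi' e l' hl' hy'
    have := hl e
    rcases u2 with rfl | u2
    · rcases v2 with rfl | v2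
      · exact absurd rfl hij
      · omega
    · omega
  refine ⟨?_, ?_⟩
  · rintro rfl
    have := both c k k (by have := hl c; omega) (by have := hl c; omega) hxc hxc
    omega
  · intro hxy
    rcases hadj c d x y xs ys hxy with ⟨e, he⟩ | ⟨e, e', -, he⟩ | ⟨e, e', he, -⟩
    · obtain ⟨n, hn, hs⟩ := (SimpleGraph.Walk.mk_mem_edges_iff_exists _).1 he
      rcases Sym2.eq_iff.1 hs with ⟨h1, h2⟩ | ⟨h1, h2⟩
      · have := both e n (n+1) (by omega) (by omega) h1.symm h2.symm
        omega
      · have := both e (n+1) n (by omega) (by omega) h2.symm h1.symm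
        omega
    · have := (hi' e' 0 (by simp) (by rw [g0, he])).1
      omega
    · have := (lo' e (p e).length le_rfl (by rw [gl, he])).1
      have := hl e
      omega

end OSComb

/-- Every outerstring graph is
(`4`-theta, `4`-prism, `4`-pyramid)-free. -/
theorem statement10 (G : SimpleGraph V) (h : IsOuterstringGraph G) :
    ¬ HasTTheta G 4 ∧ ¬ HasTPrism G 4 ∧ ¬ HasTPyramid G 4 := by
  refine ⟨?_, ?_, ?_⟩
  · rintro ⟨a, b, p1, p2, p3, i1, i2, i3, l1, l2, l3, d12, d13, d23, hadj⟩
    refine os_general h (fun _ => a) (fun _ => b)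
      (fun i => match i with | 0 => p1 | 1 => p2 | 2 => p3) ?_ ?_ ?_ (by simp) (by simp) ?_
    · intro i; fin_cases i <;> assumption
    · intro i; fin_cases i <;> simp only [] <;> first | exact (by omega : 4 ≤ p1.length) | exact (by omega : 4 ≤ p2.length) | exact (by omega : 4 ≤ p3.length)
    · intro i j hij x hx hy
      simp only [and_self]
      fin_cases i <;> fin_cases j <;>
        first
        | exact absurd rfl hij
        | exact d12 x hx hy
        | exact d13 x hx hy
        | exact d23 x hx hy
        | exact d12 x hy hx
        | exact d13 x hy hx
        | exact d23 x hy hx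
    · intro i j x y hx hy hxy
      left
      have hx' : x ∈ p1.support ∨ x ∈ p2.support ∨ x ∈ p3.support := by
        fin_cases i
        · exact Or.inl hx
        · exact Or.inr (Or.inl hx)
        · exact Or.inr (Or.inr hx)
      have hy' : y ∈ p1.support ∨ y ∈ p2.support ∨ y ∈ p3.support := by
        fin_cases j
        · exact Or.inl hy
        · exact Or.inr (Or.inl hy)
        · exact Or.inr (Or.inr hy)
      rcases hadj x y hx' hy' hxy with e | e | e
      · exact ⟨0, e⟩
      · exact ⟨1, e⟩
      · exact ⟨2, e⟩
  · rintro ⟨a1, a2, a3, b1, b2, b3, p1, p2, p3, i1, i2, i3, l1, l2, l3, d12, d13, d23,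
      a12, a23, a13, b12, b23, b13, hadj⟩
    refine os_general h ![a1, a2, a3] ![b1, b2, b3]
      (fun i => match i with | 0 => p1 | 1 => p2 | 2 => p3) ?_ ?_ ?_ ?_ ?_ ?_
    · intro i; fin_cases i <;> assumption
    · intro i; fin_cases i <;> assumption
    · intro i j hij x hx hy
      exfalso
      fin_cases i <;> fin_cases j <;>
        first
        | exact absurd rfl hij
        | exact d12 x hx hy
        | exact d13 x hx hy
        | exact d23 x hx hy
        | exact d12 x hy hx
        | exact d13 x hy hx
        | exact d23 x hy hx
    · intro i j
      fin_cases i <;> fin_cases j <;> simp [a12, a13, a23, a12.symm, a13.symm, a23.symm]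
    · intro i j
      fin_cases i <;> fin_cases j <;> simp [b12, b13, b23, b12.symm, b13.symm, b23.symm]
    · intro i j x y hx hy hxy
      have hx' : x ∈ p1.support ∨ x ∈ p2.support ∨ x ∈ p3.support := by
        fin_cases i
        · exact Or.inl hx
        · exact Or.inr (Or.inl hx)
        · exact Or.inr (Or.inr hx)
      have hy' : y ∈ p1.support ∨ y ∈ p2.support ∨ y ∈ p3.support := by
        fin_cases j
        · exact Or.inl hy
        · exact Or.inr (Or.inl hy)
        · exact Or.inr (Or.inr hy)
      rcases hadj x y hx' hy' hxy with e | e | e | e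
      · exact Or.inl ⟨0, e⟩
      · exact Or.inl ⟨1, e⟩
      · exact Or.inl ⟨2, e⟩
      · right
        simp only [Set.mem_insert_iff, Set.mem_singleton_iff, Sym2.eq_iff] at e
        rcases e with (⟨e1, e2⟩ | ⟨e1, e2⟩) | (⟨e1, e2⟩ | ⟨e1, e2⟩) | (⟨e1, e2⟩ | ⟨e1, e2⟩) |
          (⟨e1, e2⟩ | ⟨e1, e2⟩) | (⟨e1, e2⟩ | ⟨e1, e2⟩) | (⟨e1, e2⟩ | ⟨e1, e2⟩)
        · exact Or.inl ⟨0, 1, e1, e2⟩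
        · exact Or.inl ⟨1, 0, e1, e2⟩
        · exact Or.inl ⟨1, 2, e1, e2⟩
        · exact Or.inl ⟨2, 1, e1, e2⟩
        · exact Or.inl ⟨0, 2, e1, e2⟩
        · exact Or.inl ⟨2, 0, e1, e2⟩
        · exact Or.inr ⟨0, 1, e1, e2⟩
        · exact Or.inr ⟨1, 0, e1, e2⟩
        · exact Or.inr ⟨1, 2, e1, e2⟩
        · exact Or.inr ⟨2, 1, e1, e2⟩
        · exact Or.inr ⟨0, 2, e1, e2⟩
        · exact Or.inr ⟨2, 0, e1, e2⟩
  · rintro ⟨a, b1, b2, b3, p1, p2, p3, i1, i2, i3, l1, l2, l3, -, d12, d13, d23,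
      b12, b23, b13, hadj⟩
    refine os_general h (fun _ => a) ![b1, b2, b3]
      (fun i => match i with | 0 => p1 | 1 => p2 | 2 => p3) ?_ ?_ ?_ (by simp) ?_ ?_
    · intro i; fin_cases i <;> assumption
    · intro i; fin_cases i <;> assumption
    · intro i j hij x hx hy
      left
      simp only [and_self]
      fin_cases i <;> fin_cases j <;>
        first
        | exact absurd rfl hij
        | exact d12 x hx hy
        | exact d13 x hx hy
        | exact d23 x hx hy
        | exact d12 x hy hx
        | exact d13 x hy hx
        | exact d23 x hy hx
    · intro i j
      fin_cases i <;> fin_cases j <;> simp [b12, b13, b23, b12.symm, b13.symm, b23.symm]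
    · intro i j x y hx hy hxy
      have hx' : x ∈ p1.support ∨ x ∈ p2.support ∨ x ∈ p3.support := by
        fin_cases i
        · exact Or.inl hx
        · exact Or.inr (Or.inl hx)
        · exact Or.inr (Or.inr hx)
      have hy' : y ∈ p1.support ∨ y ∈ p2.support ∨ y ∈ p3.support := by
        fin_cases j
        · exact Or.inl hy
        · exact Or.inr (Or.inl hy)
        · exact Or.inr (Or.inr hy)
      rcases hadj x y hx' hy' hxy with e | e | e | e
      · exact Or.inl ⟨0, e⟩
      · exact Or.inl ⟨1, e⟩
      · exact Or.inl ⟨2, e⟩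
      · right; right
        simp only [Set.mem_insert_iff, Set.mem_singleton_iff, Sym2.eq_iff] at e
        rcases e with (⟨e1, e2⟩ | ⟨e1, e2⟩) | (⟨e1, e2⟩ | ⟨e1, e2⟩) | (⟨e1, e2⟩ | ⟨e1, e2⟩)
        · exact ⟨0, 1, e1, e2⟩
        · exact ⟨1, 0, e1, e2⟩
        · exact ⟨1, 2, e1, e2⟩
        · exact ⟨2, 1, e1, e2⟩
        · exact ⟨0, 2, e1, e2⟩
        · exact ⟨2, 0, e1, e2⟩
end

section
/- Let G be a connected graph, r a vertex, x and y two vertices lying on a common isometric path P of G with x between the endpoints, such that the subpath Q of P from y to x satisfies |A_r(Q)| ≥ 2δ+2, where A_r denotes a maximum antichain w.r.t. r. If additionally d(y,x) ≤ |d(r,y) − d(r,x)| + 2δ for some δ ≥ 0, then a contradiction arises with the bound d(y,x) ≥ |d(r,y) − d(r,x)| + |A_r(Q)| − 1. Concretely: for any isometric path Q from y to x and vertex r, if |A_r(Q)| ≥ 2δ + 2 then d(y,x) ≥ |d(r,y) − d(r,x)| + 2δ + 1. -/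
open SimpleGraph

variable {V : Type*}

theorem antichain_aux (G : SimpleGraph V) (hG : G.Connected) (r : V) {u v : V} (p : G.Walk u v) :
    ∀ A : Finset V, (∀ a ∈ A, a ∈ p.support) → IsAntichainSet G r A →
      (A.card + G.dist r u ≤ p.length + G.dist r v + 1) ∧
      ((∀ a ∈ A, ¬ dagReach G r u a) → A.card + G.dist r u ≤ p.length + G.dist r v) := by
  classical
  induction p with
  | nil =>
    rename_i u
    intro A hA _
    have hA' : A ⊆ {u} := by
      intro a ha
      simpa using hA a ha
    refine ⟨?_, ?_⟩
    · have := Finset.card_le_card hA'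
      simp at this ⊢
      omega
    · intro h
      have : A = ∅ := by
        apply Finset.eq_empty_of_forall_notMem
        intro a ha
        have h1 : a = u := by simpa using hA' ha
        subst h1
        exact h a ha Relation.ReflTransGen.refl
      simp [this]
  | cons hadj p ih =>
    rename_i u w v
    have hstep : G.dist r u ≤ G.dist r w + 1 := by
      have h1 := hG.dist_triangle (u := r) (v := w) (w := u)
      have h2 : G.dist w u = 1 := SimpleGraph.dist_eq_one_iff_adj.mpr hadj.symm
      omega
    have key : ∀ A : Finset V, (∀ a ∈ A, a ∈ (Walk.cons hadj p).support) →
        IsAntichainSet G r A → (∀ a ∈ A, ¬ dagReach G r u a) →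
        A.card + G.dist r u ≤ (Walk.cons hadj p).length + G.dist r v := by
      intro A hA hanti h
      have hA' : ∀ a ∈ A, a ∈ p.support := by
        intro a ha
        have h1 := hA a ha
        rw [Walk.support_cons, List.mem_cons] at h1
        rcases h1 with h1 | h1
        · subst h1
          exact absurd Relation.ReflTransGen.refl (h a ha)
        · exact h1
      obtain ⟨i1, i2⟩ := ih A hA' hanti
      rw [Walk.length_cons]
      by_cases hd : G.dist r u = G.dist r w + 1
      · have := i2 (fun a ha hr => h a ha (Relation.ReflTransGen.head ⟨hadj, hd⟩ hr))
        omega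
      · omega
    intro A hA hanti
    refine ⟨?_, key A hA hanti⟩
    by_cases hu : u ∈ A
    · have := key (A.erase u) (fun a ha => hA a (Finset.mem_of_mem_erase ha))
        (fun a ha b hb => hanti a (Finset.mem_of_mem_erase ha) b (Finset.mem_of_mem_erase hb))
        (fun a ha => (hanti u hu a (Finset.mem_of_mem_erase ha)
          (Finset.ne_of_mem_erase ha).symm).1)
      have hc := Finset.card_erase_add_one hu
      omega
    · have hA' : ∀ a ∈ A, a ∈ p.support := by
        intro a ha
        have h1 := hA a ha
        rw [Walk.support_cons, List.mem_cons] at h1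
        rcases h1 with h1 | h1
        · subst h1
          exact absurd ha hu
        · exact h1
      have := (ih A hA' hanti).1
      rw [Walk.length_cons]
      omega

/-- For any isometric path `Q` from `y` to `x` in a connected graph
and any vertex `r`, if some antichain (w.r.t. `r`) among the vertices of `Q` has
size at least `2δ + 2`, then `d(y,x) ≥ |d(r,y) - d(r,x)| + 2δ + 1`. -/
theorem statement13 (G : SimpleGraph V) (hG : G.Connected) (r x y : V) (δ : ℕ)
    (Q : G.Walk y x) (hQ : IsIsometricPath G Q)
    (A : Finset V) (hA : ∀ a ∈ A, a ∈ Q.support) (hanti : IsAntichainSet G r A)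
    (hcard : 2 * δ + 2 ≤ A.card) :
    ((G.dist r y : ℤ) - (G.dist r x : ℤ)).natAbs + 2 * δ + 1 ≤ G.dist y x := by
  have h1 := (antichain_aux G hG r Q A hA hanti).1
  have h2 := (antichain_aux G hG r Q.reverse A (by simpa using hA) hanti).1
  rw [Walk.length_reverse] at h2
  have h3 := hQ.2
  omega
end
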